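/- arXiv:1906.05161 — 2 statements merged into one kernel-verified Lean document; each statement's English description precedes it below -/
import Mathlib

section
/- Fix p > 2 and k ∈ (0, d_p). There exist ρ₀ > 0 depending only on n, p, k, L, and c > 0 depending only on n, p, k, with the following property. Let ω ⊂ ℝⁿ be a bounded open set with C² boundary, a ∈ ∂ω and 0 < ρ ≤ ρ₀; set D = B_ρ(a) ∩ ω, assume the distance function δ(x) = dist(x, ∂ω) is C² on the closure of D with ‖Δδ‖_{L∞(D)} ≤ L. Let t₀ < t₁ and let v, its first and second spatial derivatives and its first time derivative be continuous on ω̄ × [t₀, t₁], with v_t − Δv ≤ |∇v|^p in ω × (t₀, t₁) and v = 0 on ∂ω × (t₀, t₁). If v(x,t) ≤ (1−β)^{−1} k δ(x)^{1−β} for all (x,t) ∈ D × (t₀, t₁), then for all b ∈ B_{ρ/2}(a) ∩ ∂ω and t ∈ (t₀, t₁): v_ν(b,t) = ∇v(b,t)·ν_b ≤ c ρ^{−1/(p−1)} ((t₁ − t₀ + ρ²)/(t − t₀))^{1/(p−2)}. -/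
open Set Metric Filter RealInnerProductSpace

noncomputable section

set_option linter.unusedVariables false

/-- A set `Ω ⊆ ℝⁿ` has boundary of class `C²`: near each boundary point, `Ω` is the strict
sublevel set of a `C²` function with nonvanishing gradient (equivalently, after a rigid motion,
the boundary is locally the graph of a `C²` function with `Ω` strictly on one side). -/
def IsC2Boundary {n : ℕ} (Ω : Set (EuclideanSpace ℝ (Fin n))) : Prop :=
  ∀ x ∈ frontier Ω, ∃ f : EuclideanSpace ℝ (Fin n) → ℝ, ∃ U ∈ nhds x,
    ContDiffOn ℝ 2 f U ∧ (∀ y ∈ U, fderiv ℝ f y ≠ 0) ∧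
    U ∩ Ω = U ∩ {y | f y < 0} ∧ U ∩ frontier Ω = U ∩ {y | f y = 0}

theorem aux_second_deriv {f f1 : ℝ → ℝ} {f2 : ℝ} (hf : ∀ᶠ s in nhds (0:ℝ), HasDerivAt f (f1 s) s)
    (hf1 : HasDerivAt f1 f2 0) (hmax : IsLocalMax f 0) : f1 0 = 0 ∧ f2 ≤ 0 := by
  have h0 : f1 0 = 0 := hmax.hasDerivAt_eq_zero hf.self_of_nhds
  refine ⟨h0, ?_⟩
  by_contra hpos
  push Not at hpos
  have hd : deriv f =ᶠ[nhds 0] f1 := hf.mono fun s hs => hs.deriv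
  have hdd : deriv (deriv f) 0 = f2 := by rw [hd.deriv_eq]; exact hf1.deriv
  have hmin : IsLocalMin f 0 := isLocalMin_of_deriv_deriv_pos (by rw [hdd]; exact hpos)
    (by rw [hd.self_of_nhds, h0]) hf.self_of_nhds.continuousAt
  have hc : f =ᶠ[nhds 0] fun _ => f 0 := by
    filter_upwards [hmax, hmin] with s h1 h2 using le_antisymm h1 h2
  have hc1 : deriv f =ᶠ[nhds 0] fun _ => 0 := by
    have := hc.deriv
    simpa using this
  have : deriv (deriv f) 0 = 0 := by rw [hc1.deriv_eq]; simp
  linarith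

theorem aux_const {k β p : ℝ} (N K C : ℝ) (hp : 0 < p) (h : k ^ p < k * β) :
    ∃ κ : ℝ, 0 < κ ∧ κ ≤ 1 ∧ 2 * N * κ ≤ 1 ∧
      0 < k * β * (1 - 2 * N * κ) ^ 2 - C * κ - (k * (1 + 2 * N * κ) + 8 * K * κ) ^ p := by
  have hcont : Continuous fun κ : ℝ =>
      k * β * (1 - 2 * N * κ) ^ 2 - C * κ - (k * (1 + 2 * N * κ) + 8 * K * κ) ^ p := by
    have : Continuous fun κ : ℝ => (k * (1 + 2 * N * κ) + 8 * K * κ) ^ p :=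
      Continuous.rpow_const (by fun_prop) (fun _ => Or.inr hp.le)
    fun_prop
  have h1 : ∀ᶠ κ in nhds (0:ℝ), 0 < k * β * (1 - 2 * N * κ) ^ 2 - C * κ - (k * (1 + 2 * N * κ) + 8 * K * κ) ^ p := by
    apply hcont.continuousAt.eventually_const_lt
    simp; exact h
  have h2 : ∀ᶠ κ in nhds (0:ℝ), 2 * N * κ < 1 := by
    have : Continuous fun κ : ℝ => 2 * N * κ := by fun_prop
    apply this.continuousAt.eventually_lt_const
    simp
  have h3 : ∀ᶠ κ in nhds (0:ℝ), κ < 1 := eventually_lt_nhds (by norm_num)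
  have h4 := ((h1.and (h2.and h3)).filter_mono (nhdsWithin_le_nhds (s := Ioi 0))).and self_mem_nhdsWithin
  obtain ⟨κ, ⟨a, b, c⟩, d⟩ := h4.exists
  exact ⟨κ, d, c.le, b.le, a⟩

theorem aux_grad_dist {F : Type*} [NormedAddCommGroup F] [InnerProductSpace ℝ F] [ProperSpace F]
    {S : Set F} (hS : IsClosed S) (hne : S.Nonempty) {δ : F → ℝ} (hδ : ∀ x, δ x = infDist x S)
    {x : F} (hx : x ∉ S) {g : F →L[ℝ] ℝ} (hg : HasFDerivAt δ g x) : ‖g‖ = 1 := by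
  have hδ' : δ = fun x => infDist x S := funext hδ
  apply le_antisymm
  · have : LipschitzWith 1 δ := by rw [hδ']; exact lipschitz_infDist_pt S
    simpa using hg.le_of_lipschitz this
  · obtain ⟨y, hyS, hy⟩ := hS.exists_infDist_eq_dist hne x
    have hpos : 0 < dist x y := dist_pos.2 (fun h => hx (h ▸ hyS))
    -- along segment
    have hle : ∀ s ∈ Icc (0:ℝ) 1, δ (x + s • (y - x)) ≤ (1 - s) * dist x y := by
      intro s hs
      rw [hδ]
      refine (infDist_le_dist_of_mem hyS).trans (le_of_eq ?_)
      rw [dist_eq_norm, dist_eq_norm]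
      have : x + s • (y - x) - y = (1 - s) • (x - y) := by module
      rw [this, norm_smul, Real.norm_of_nonneg (by linarith [hs.2])]
    have hline : HasDerivAt (fun s : ℝ => x + s • (y - x)) (y - x) 0 := by
      simpa using ((hasDerivAt_id (0:ℝ)).smul_const (y - x)).const_add x
    have hg0 : HasFDerivAt δ g (x + (0:ℝ) • (y - x)) := by simpa using hg
    have hd := hg0.comp_hasDerivAt (0:ℝ) hline
    have hd2 : HasDerivAt (fun s : ℝ => δ (x + s • (y - x)) + s * dist x y) (g (y - x) + 1 * dist x y) 0 :=
      hd.add ((hasDerivAt_id (0:ℝ)).mul_const _)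
    have hle2 : g (y - x) + 1 * dist x y ≤ 0 := by
      have ht := hd2.hasDerivWithinAt (s := Ioi 0)
      rw [hasDerivWithinAt_iff_tendsto_slope' (by simp)] at ht
      refine le_of_tendsto ht ?_
      filter_upwards [Ioo_mem_nhdsGT (show (0:ℝ) < 1 by norm_num)] with s hs
      rw [slope_def_field]
      apply div_nonpos_of_nonpos_of_nonneg _ (by linarith [hs.1])
      have := hle s ⟨hs.1.le, hs.2.le⟩
      simp only [zero_smul, add_zero, zero_mul]
      rw [hδ x, hy]
      linarith
    have h1 : dist x y ≤ ‖g (y - x)‖ := by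
      rw [Real.norm_eq_abs]; linarith [neg_le_abs (g (y - x))]
    have h2 := g.le_opNorm (y - x)
    rw [← dist_eq_norm, dist_comm] at h2
    by_contra hlt
    push Not at hlt
    nlinarith

theorem aux_line {u u1 d d1 : ℝ → ℝ} {u2 d2 K β M N Q P0 P1 P2 : ℝ} (hM : 0 ≤ M)
    (hu : ∀ᶠ s in nhds (0:ℝ), HasDerivAt u (u1 s) s) (hu1 : HasDerivAt u1 u2 0)
    (hd : ∀ᶠ s in nhds (0:ℝ), HasDerivAt d (d1 s) s) (hd1 : HasDerivAt d1 d2 0)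
    (hd0 : 0 < d 0) (hP0 : 0 < P0)
    (hmax : IsLocalMax (fun s => u s - K * ((d s + M * (P0 + P1 * s + P2 * s ^ 2) ^ N) ^ (1 - β)
      - Q * (P0 + P1 * s + P2 * s ^ 2) ^ 2)) 0) :
    u1 0 = K * ((1 - β) * (d 0 + M * P0 ^ N) ^ (-β) * (d1 0 + M * N * P0 ^ (N - 1) * P1)
        - 2 * Q * P0 * P1) ∧
    u2 ≤ K * ((1 - β) * (-β * (d 0 + M * P0 ^ N) ^ (-β - 1) * (d1 0 + M * N * P0 ^ (N - 1) * P1) ^ 2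
        + (d 0 + M * P0 ^ N) ^ (-β) *
          (d2 + M * N * ((N - 1) * P0 ^ (N - 2) * P1 ^ 2 + 2 * P2 * P0 ^ (N - 1))))
        - 2 * Q * (P1 ^ 2 + 2 * P0 * P2)) := by
  set ψ : ℝ → ℝ := fun s => P0 + P1 * s + P2 * s ^ 2 with hψ
  have hψ0 : ψ 0 = P0 := by simp [hψ]
  have hψd : ∀ s, HasDerivAt ψ (P1 + 2 * P2 * s) s := by
    intro s
    have h := (((hasDerivAt_id s).const_mul P1).const_add P0).add ((hasDerivAt_pow 2 s).const_mul P2)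
    exact h.congr_deriv (by simp; ring)
  have hψ1d : HasDerivAt (fun s : ℝ => P1 + 2 * P2 * s) (2 * P2) 0 := by
    simpa using ((hasDerivAt_id (0:ℝ)).const_mul (2 * P2)).const_add P1
  have hψpos : ∀ᶠ s in nhds (0:ℝ), 0 < ψ s :=
    (hψd 0).continuousAt.eventually_const_lt (by rw [hψ0]; exact hP0)
  have hdpos : ∀ᶠ s in nhds (0:ℝ), 0 < d s :=
    hd.self_of_nhds.continuousAt.eventually_const_lt hd0
  have hz : ∀ᶠ s in nhds (0:ℝ), 0 < d s + M * ψ s ^ N := by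
    filter_upwards [hψpos, hdpos] with s h1 h2
    have := Real.rpow_pos_of_pos h1 N
    positivity
  set z1 : ℝ → ℝ := fun s => d1 s + M * N * ψ s ^ (N - 1) * (P1 + 2 * P2 * s) with hz1
  have hzd : ∀ᶠ s in nhds (0:ℝ), HasDerivAt (fun s => d s + M * ψ s ^ N) (z1 s) s := by
    filter_upwards [hψpos, hd] with s h1 h2
    have h := h2.add (((hψd s).rpow_const (p := N) (Or.inl h1.ne')).const_mul M)
    exact h.congr_deriv (by simp only [hz1]; ring)
  have hz1d : HasDerivAt z1 (d2 + M * N * ((N - 1) * P0 ^ (N - 2) * P1 ^ 2 + 2 * P2 * P0 ^ (N - 1))) 0 := by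
    have h := hd1.add ((((hψd 0).rpow_const (p := N - 1) (Or.inl hψpos.self_of_nhds.ne')).const_mul (M * N)).mul hψ1d)
    exact h.congr_deriv (by rw [hψ0, show N - 1 - 1 = N - 2 by ring]; ring)
  have hW : ∀ᶠ s in nhds (0:ℝ), HasDerivAt (fun s => u s - K * ((d s + M * ψ s ^ N) ^ (1 - β) - Q * ψ s ^ 2))
      (u1 s - K * ((1 - β) * (d s + M * ψ s ^ N) ^ (-β) * z1 s - 2 * Q * ψ s * (P1 + 2 * P2 * s))) s := by
    filter_upwards [hu, hzd, hz] with s h1 h2 h3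
    have h := h1.sub (((h2.rpow_const (p := 1 - β) (Or.inl h3.ne')).sub (((hψd s).pow 2).const_mul Q)).const_mul K)
    exact h.congr_deriv (by rw [show 1 - β - 1 = -β by ring]; push_cast; ring)
  have hW1 := hu1.sub ((((((hzd.self_of_nhds.rpow_const (p := -β) (Or.inl hz.self_of_nhds.ne')).const_mul (1 - β)).mul hz1d)).sub
    (((hψd 0).const_mul (2 * Q)).mul hψ1d)).const_mul K)
  have hres := aux_second_deriv hW hW1 hmax
  obtain ⟨ha, hb⟩ := hres
  have hz10 : z1 0 = d1 0 + M * N * P0 ^ (N - 1) * P1 := by simp [hz1, hψ0]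
  simp only [hz10, hψ0, mul_zero, add_zero] at ha hb
  constructor
  · linarith
  · refine le_trans (sub_nonpos.1 hb) (le_of_eq ?_)
    ring

set_option maxHeartbeats 1000000 in
theorem aux_key {n : ℕ} (g y G : EuclideanSpace ℝ (Fin n)) (h d2 : Fin n → ℝ)
    {k β p K N κ ρ L d M Q P0 vt : ℝ} (hk : 0 < k) (hβ0 : 0 < β) (hβ1 : β < 1) (hp : 2 < p)
    (hβp : β * p = β + 1) (hK : K * (1 - β) = k) (hK0 : 0 < K) (hN : 2 ≤ N) (hκ : 0 < κ)
    (hκ1 : κ ≤ 1) (hNκ : 2 * N * κ ≤ 1) (hρ : 0 < ρ)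
    (hconst : 2 * k * ρ * L < k * β * (1 - 2 * N * κ) ^ 2 -
      (4 * K + 8 * k * N * (N - 1) + 16 * n * K) * κ - (k * (1 + 2 * N * κ) + 8 * K * κ) ^ p)
    (hg : ‖g‖ = 1) (hy : ‖y‖ ≤ ρ) (hd0 : 0 < d) (hd1 : d ≤ ρ) (hM0 : 0 ≤ M) (hM1 : M ≤ κ * ρ)
    (hQ0 : 0 ≤ Q) (hQ1 : Q ≤ κ * ρ ^ (1 - β)) (hP0 : 0 < P0) (hP1 : P0 ≤ 1)
    (hL : |∑ i, d2 i| ≤ L)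
    (hG : ∀ i, G i = K * ((1 - β) * (d + M * P0 ^ N) ^ (-β) *
        (g i + M * N * P0 ^ (N - 1) * (-(2 * y i / ρ ^ 2)))
        - 2 * Q * P0 * (-(2 * y i / ρ ^ 2))))
    (hh : ∀ i, h i ≤ K * ((1 - β) * (-β * (d + M * P0 ^ N) ^ (-β - 1) *
        (g i + M * N * P0 ^ (N - 1) * (-(2 * y i / ρ ^ 2))) ^ 2
        + (d + M * P0 ^ N) ^ (-β) *
          (d2 i + M * N * ((N - 1) * P0 ^ (N - 2) * (-(2 * y i / ρ ^ 2)) ^ 2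
            + 2 * (-(1 / ρ ^ 2)) * P0 ^ (N - 1))))
        - 2 * Q * ((-(2 * y i / ρ ^ 2)) ^ 2 + 2 * P0 * (-(1 / ρ ^ 2)))))
    (hvt : -(K * κ * ρ ^ (1 - β) / ρ ^ 2) ≤ vt)
    (hsub : vt - ∑ i, h i ≤ ‖G‖ ^ p) : False := by
  set z := d + M * P0 ^ N with hz
  have hPN : P0 ^ N ≤ 1 := Real.rpow_le_one hP0.le hP1 (by linarith)
  have hPN0 : 0 ≤ P0 ^ N := Real.rpow_nonneg hP0.le _
  have hPa : P0 ^ (N - 1) ≤ 1 := Real.rpow_le_one hP0.le hP1 (by linarith)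
  have hPa0 : 0 ≤ P0 ^ (N - 1) := Real.rpow_nonneg hP0.le _
  have hPb : P0 ^ (N - 2) ≤ 1 := Real.rpow_le_one hP0.le hP1 (by linarith)
  have hPb0 : 0 ≤ P0 ^ (N - 2) := Real.rpow_nonneg hP0.le _
  have hz0 : 0 < z := by positivity
  have hMρ : M ≤ ρ := hM1.trans (by nlinarith)
  have hz2 : z ≤ 2 * ρ := by
    have := mul_le_mul_of_nonneg_left hPN hM0
    linarith
  generalize hPa' : P0 ^ (N - 1) = Pa at *
  generalize hPb' : P0 ^ (N - 2) = Pb at *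
  set X := z ^ (-β - 1) with hX
  set Z := z ^ (-β) with hZ
  set R := ρ ^ (-β) with hR
  have hX0 : 0 < X := Real.rpow_pos_of_pos hz0 _
  have hZ0 : 0 < Z := Real.rpow_pos_of_pos hz0 _
  have hR0 : 0 < R := Real.rpow_pos_of_pos hρ _
  have hZX : Z = X * z := by
    rw [hZ, hX, ← Real.rpow_add_one hz0.ne']; congr 1; ring
  have hRρ : ρ ^ (1 - β) = R * ρ := by
    rw [hR, ← Real.rpow_add_one hρ.ne']; congr 1; ring
  have hRZ : R ≤ 2 * Z := by
    have h1 : (2 * ρ) ^ (-β) ≤ Z := Real.rpow_le_rpow_of_nonpos hz0 hz2 (by linarith)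
    rw [Real.mul_rpow (by norm_num) hρ.le] at h1
    have h2 : (2:ℝ) ^ (-1:ℝ) ≤ 2 ^ (-β) :=
      Real.rpow_le_rpow_of_exponent_le (by norm_num) (by linarith)
    rw [Real.rpow_neg_one] at h2
    have h3 := mul_le_mul_of_nonneg_right h2 hR0.le
    linarith
  have hXz := mul_le_mul_of_nonneg_left hz2 hX0.le
  have hRX : R / ρ ≤ 4 * X := by
    rw [div_le_iff₀ hρ]
    linarith
  have hZρ : Z / ρ ≤ 2 * X := by
    rw [div_le_iff₀ hρ]
    linarith
  have hZp : Z ^ p = X := by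
    rw [hZ, hX, ← Real.rpow_mul hz0.le]; congr 1; linarith
  rw [hRρ] at hQ1 hvt
  set e1 := M * N * Pa * (2 / ρ ^ 2) with he1
  have hN0 : 0 < N := by linarith
  have he10 : 0 ≤ e1 := by positivity
  have hMN : M * N * Pa ≤ κ * ρ * N := by
    calc M * N * Pa ≤ M * N * 1 := by gcongr
      _ ≤ κ * ρ * N := by rw [mul_one]; gcongr
  have he1ρ : e1 * ρ ≤ 2 * N * κ := by
    have : e1 * ρ = (M * N * Pa) * (2 / ρ) := by rw [he1]; field_simp
    rw [this]
    calc (M * N * Pa) * (2 / ρ) ≤ (κ * ρ * N) * (2 / ρ) := by gcongr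
      _ = 2 * N * κ := by field_simp
  have he1y : ‖e1 • y‖ ≤ 2 * N * κ := by
    rw [norm_smul, Real.norm_of_nonneg he10]
    exact (mul_le_mul_of_nonneg_left hy he10).trans he1ρ
  -- gradient
  have hGv : G = (k * Z) • (g - e1 • y) + (K * (4 * Q * P0 / ρ ^ 2)) • y := by
    ext i
    simp only [PiLp.add_apply, PiLp.smul_apply, PiLp.sub_apply, smul_eq_mul]
    rw [hG i, he1, ← hK]
    field_simp
    ring
  have hGn : ‖G‖ ≤ Z * (k * (1 + 2 * N * κ) + 8 * K * κ) := by
    have h1 : ‖(k * Z) • (g - e1 • y)‖ ≤ k * Z * (1 + 2 * N * κ) := by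
      rw [norm_smul, Real.norm_of_nonneg (by positivity)]
      gcongr
      exact (norm_sub_le _ _).trans (by rw [hg]; linarith)
    have h2 : ‖(K * (4 * Q * P0 / ρ ^ 2)) • y‖ ≤ K * (4 * κ * R) := by
      rw [norm_smul, Real.norm_of_nonneg (by positivity), mul_assoc]
      refine mul_le_mul_of_nonneg_left ?_ hK0.le
      calc 4 * Q * P0 / ρ ^ 2 * ‖y‖ ≤ 4 * (κ * (R * ρ)) * 1 / ρ ^ 2 * ρ := by gcongr
        _ = 4 * κ * R := by field_simp
    rw [hGv]
    refine (norm_add_le _ _).trans ?_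
    have h3 : K * (4 * κ * R) ≤ K * (4 * κ * (2 * Z)) := by gcongr
    linarith
  have hGp : ‖G‖ ^ p ≤ X * (k * (1 + 2 * N * κ) + 8 * K * κ) ^ p := by
    calc ‖G‖ ^ p ≤ (Z * (k * (1 + 2 * N * κ) + 8 * K * κ)) ^ p :=
          Real.rpow_le_rpow (norm_nonneg _) hGn (by linarith)
      _ = _ := by rw [Real.mul_rpow hZ0.le (by positivity), hZp]
  -- Laplacian
  have hh' : ∀ i, h i ≤ -(k * β * X) * ((g - e1 • y) i) ^ 2 + k * Z * d2 i
      + (k * Z * (M * N * (N - 1) * Pb * 4 / ρ ^ 4)) * (y i) ^ 2 + 4 * K * Q * P0 / ρ ^ 2 := by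
    intro i
    have h1 : 0 ≤ k * Z * (M * N * Pa * (2 / ρ ^ 2)) + 2 * K * Q * (2 * y i / ρ ^ 2) ^ 2 := by
      positivity
    refine (hh i).trans ?_
    simp only [PiLp.smul_apply, PiLp.sub_apply, smul_eq_mul]
    rw [he1, ← sub_nonneg]
    refine h1.trans (le_of_eq ?_)
    rw [← hK]
    field_simp
    ring
  have hsq : ∀ w : EuclideanSpace ℝ (Fin n), ∑ i, (w i) ^ 2 = ‖w‖ ^ 2 := fun w => by
    rw [EuclideanSpace.norm_sq_eq]; simp
  have hsum : ∑ i, h i ≤ -(k * β * X) * ‖g - e1 • y‖ ^ 2 + k * Z * ∑ i, d2 i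
      + (k * Z * (M * N * (N - 1) * Pb * 4 / ρ ^ 4)) * ‖y‖ ^ 2 + n * (4 * K * Q * P0 / ρ ^ 2) := by
    refine (Finset.sum_le_sum fun i _ => hh' i).trans (le_of_eq ?_)
    rw [Finset.sum_add_distrib, Finset.sum_add_distrib, Finset.sum_add_distrib,
      ← Finset.mul_sum, ← Finset.mul_sum, ← Finset.mul_sum, hsq, hsq]
    simp
  have t1 : (1 - 2 * N * κ) ^ 2 ≤ ‖g - e1 • y‖ ^ 2 := by
    have := norm_sub_norm_le g (e1 • y)
    rw [hg] at this
    exact pow_le_pow_left₀ (by linarith) (by linarith) 2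
  have hL0 : 0 ≤ L := (abs_nonneg _).trans hL
  have t2 : k * Z * ∑ i, d2 i ≤ 2 * k * ρ * L * X := by
    calc k * Z * ∑ i, d2 i ≤ k * Z * L := by
          gcongr; exact (le_abs_self _).trans hL
      _ ≤ k * (2 * X * ρ) * L := by
          gcongr; exact (div_le_iff₀ hρ).1 hZρ
      _ = _ := by ring
  have hN1 : 0 ≤ N - 1 := by linarith
  have t3 : (k * Z * (M * N * (N - 1) * Pb * 4 / ρ ^ 4)) * ‖y‖ ^ 2
      ≤ 8 * k * N * (N - 1) * κ * X := by
    calc _ ≤ (k * Z * ((κ * ρ) * N * (N - 1) * 1 * 4 / ρ ^ 4)) * ρ ^ 2 := by gcongr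
      _ = 4 * k * N * (N - 1) * κ * (Z / ρ) := by field_simp
      _ ≤ 4 * k * N * (N - 1) * κ * (2 * X) := by gcongr
      _ = _ := by ring
  have t4 : n * (4 * K * Q * P0 / ρ ^ 2) ≤ 16 * n * K * κ * X := by
    calc _ ≤ n * (4 * K * (κ * (R * ρ)) * 1 / ρ ^ 2) := by gcongr
      _ = 4 * n * K * κ * (R / ρ) := by field_simp
      _ ≤ 4 * n * K * κ * (4 * X) := by gcongr
      _ = _ := by ring
  have t5 : K * κ * (R * ρ) / ρ ^ 2 ≤ 4 * K * κ * X := by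
    calc _ = K * κ * (R / ρ) := by field_simp
      _ ≤ K * κ * (4 * X) := by gcongr
      _ = _ := by ring
  have t6 : k * β * X * (1 - 2 * N * κ) ^ 2 ≤ k * β * X * ‖g - e1 • y‖ ^ 2 := by gcongr
  have := mul_lt_mul_of_pos_right hconst hX0
  linarith

theorem aux_compare {n : ℕ} {k β p K m N κ ρ L t₀ t₁ : ℝ} {a : EuclideanSpace ℝ (Fin n)}
    {ω : Set (EuclideanSpace ℝ (Fin n))} {δ : EuclideanSpace ℝ (Fin n) → ℝ}
    (hk : 0 < k) (hβ0 : 0 < β) (hβ1 : β < 1) (hp : 2 < p)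
    (hβp : β * p = β + 1) (hK : K * (1 - β) = k) (hK0 : 0 < K)
    (hm1 : 1 ≤ m) (hmβ : m * (1 - β) = 1) (hNm : N = 2 * m) (hκ : 0 < κ)
    (hκ1 : κ ≤ 1) (hNκ : 2 * N * κ ≤ 1) (hρ : 0 < ρ)
    (hconst : 2 * k * ρ * L < k * β * (1 - 2 * N * κ) ^ 2 -
      (4 * K + 8 * k * N * (N - 1) + 16 * n * K) * κ - (k * (1 + 2 * N * κ) + 8 * K * κ) ^ p)
    (hω : IsOpen ω) (ha : a ∈ frontier ω) (hδ : ∀ x, δ x = infDist x (frontier ω))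
    (hδ2 : ContDiffOn ℝ 2 δ (closure (ball a ρ ∩ ω)))
    (hL : ∀ x ∈ ball a ρ ∩ ω,
      |∑ i : Fin n, fderiv ℝ (fun y => fderiv ℝ δ y (EuclideanSpace.single i (1 : ℝ))) x
        (EuclideanSpace.single i (1 : ℝ))| ≤ L)
    (ht : t₀ < t₁)
    (v : EuclideanSpace ℝ (Fin n) → ℝ → ℝ) (Gv : EuclideanSpace ℝ (Fin n) → ℝ → EuclideanSpace ℝ (Fin n)) (Hv : EuclideanSpace ℝ (Fin n) → ℝ → (EuclideanSpace ℝ (Fin n) →L[ℝ] EuclideanSpace ℝ (Fin n)))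
      (v' : EuclideanSpace ℝ (Fin n) → ℝ → ℝ)
    (hcont : ContinuousOn (fun q : EuclideanSpace ℝ (Fin n) × ℝ => v q.1 q.2)
      (closure ω ×ˢ Icc t₀ t₁))
    (hGv : ∀ t ∈ Icc t₀ t₁, ∀ x ∈ closure ω,
      HasGradientWithinAt (fun y => v y t) (Gv x t) (closure ω) x)
    (hHv : ∀ t ∈ Icc t₀ t₁, ∀ x ∈ closure ω,
      HasFDerivWithinAt (fun y => Gv y t) (Hv x t) (closure ω) x)
    (hv' : ∀ x ∈ closure ω, ∀ t ∈ Icc t₀ t₁,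
      HasDerivWithinAt (fun s => v x s) (v' x t) (Icc t₀ t₁) t)
    (hsub : ∀ x ∈ ω, ∀ t ∈ Ioo t₀ t₁,
      v' x t - ∑ i : Fin n, ⟪Hv x t (EuclideanSpace.single i (1 : ℝ)),
        EuclideanSpace.single i (1 : ℝ)⟫ ≤ ‖Gv x t‖ ^ p)
    (hbd : ∀ b ∈ frontier ω, ∀ t ∈ Ioo t₀ t₁, v b t = 0)
    (hup : ∀ x ∈ ball a ρ ∩ ω, ∀ t ∈ Ioo t₀ t₁, v x t ≤ K * (δ x) ^ (1 - β)) :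
    ∀ x ∈ closure (ball a ρ ∩ ω), ∀ t ∈ Ioo t₀ t₁,
      v x t ≤ K * ((δ x + κ ^ m * ρ * ((t - t₀) / (t₁ - t₀ + ρ ^ 2)) ^ m *
        (1 - ‖x - a‖ ^ 2 / ρ ^ 2) ^ N) ^ (1 - β) -
        κ * ρ ^ (1 - β) * ((t - t₀) / (t₁ - t₀ + ρ ^ 2)) * (1 - ‖x - a‖ ^ 2 / ρ ^ 2) ^ 2) := by
  intro x₀ hx₀ t ht'
  set T := t₁ - t₀ + ρ ^ 2 with hT
  have hT0 : 0 < T := by have : 0 < ρ ^ 2 := by positivity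
                         linarith
  set D := ball a ρ ∩ ω with hD
  have hm0 : 0 < m := by linarith
  have hN0 : 0 < N := by linarith
  have h1β : 0 < 1 - β := by linarith
  have hDo : IsOpen D := isOpen_ball.inter hω
  have hDcl : closure D ⊆ closure ω := closure_mono inter_subset_right
  have hδc : Continuous δ := by
    rw [show δ = fun x => infDist x (frontier ω) from funext hδ]; exact continuous_infDist_pt _
  have hδ0 : ∀ x, 0 ≤ δ x := fun x => by rw [hδ]; exact infDist_nonneg
  set w : EuclideanSpace ℝ (Fin n) → ℝ → ℝ := fun x t =>
    K * ((δ x + κ ^ m * ρ * ((t - t₀) / T) ^ m *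
        (1 - ‖x - a‖ ^ 2 / ρ ^ 2) ^ N) ^ (1 - β) -
        κ * ρ ^ (1 - β) * ((t - t₀) / T) * (1 - ‖x - a‖ ^ 2 / ρ ^ 2) ^ 2) with hw
  change v x₀ t ≤ w x₀ t
  have hwc : Continuous fun q : EuclideanSpace ℝ (Fin n) × ℝ => w q.1 q.2 := by
    have h1 : Continuous fun q : EuclideanSpace ℝ (Fin n) × ℝ => ((q.2 - t₀) / T) ^ m :=
      Continuous.rpow_const (by fun_prop) (fun _ => Or.inr hm0.le)
    have h2 : Continuous fun q : EuclideanSpace ℝ (Fin n) × ℝ => (1 - ‖q.1 - a‖ ^ 2 / ρ ^ 2) ^ N :=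
      Continuous.rpow_const (by fun_prop) (fun _ => Or.inr hN0.le)
    have h3 : Continuous fun q : EuclideanSpace ℝ (Fin n) × ℝ => (δ q.1 + κ ^ m * ρ * ((q.2 - t₀) / T) ^ m *
        (1 - ‖q.1 - a‖ ^ 2 / ρ ^ 2) ^ N) ^ (1 - β) :=
      Continuous.rpow_const (by fun_prop) (fun _ => Or.inr h1β.le)
    simp only [hw]
    fun_prop
  -- extend the upper bound to the closure
  have hup' : ∀ x ∈ closure D, ∀ s ∈ Icc t₀ t₁, v x s ≤ K * (δ x) ^ (1 - β) := by
    have hcl : closure (D ×ˢ Ioo t₀ t₁) = closure D ×ˢ Icc t₀ t₁ := by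
      rw [closure_prod_eq, closure_Ioo ht.ne]
    have hc2 : Continuous fun q : EuclideanSpace ℝ (Fin n) × ℝ => K * (δ q.1) ^ (1 - β) :=
      continuous_const.mul (Continuous.rpow_const (by fun_prop) (fun _ => Or.inr h1β.le))
    intro x hx s hs
    refine le_on_closure (s := D ×ˢ Ioo t₀ t₁) (f := fun q : EuclideanSpace ℝ (Fin n) × ℝ => v q.1 q.2)
      (g := fun q => K * (δ q.1) ^ (1 - β)) ?_ ?_ hc2.continuousOn (x := (x, s)) ?_
    · rintro ⟨y, r⟩ ⟨hy, hr⟩; exact hup y hy r hr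
    · rw [hcl]; exact hcont.mono (prod_mono hDcl Subset.rfl)
    · rw [hcl]; exact ⟨hx, hs⟩
  by_contra hlt
  push Not at hlt
  -- maximum point
  have hcomp : IsCompact (closure D ×ˢ Icc t₀ t) :=
    ((isBounded_ball.subset inter_subset_left).isCompact_closure).prod isCompact_Icc
  have hsubset : closure D ×ˢ Icc t₀ t ⊆ closure ω ×ˢ Icc t₀ t₁ :=
    prod_mono hDcl (Icc_subset_Icc_right ht'.2.le)
  obtain ⟨⟨x, τ⟩, ⟨hxcl, hτ⟩, hmax⟩ := hcomp.exists_isMaxOn ⟨(x₀, t), hx₀, ht'.1.le, le_rfl⟩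
    ((hcont.mono hsubset).sub hwc.continuousOn)
  have hmax' : ∀ y ∈ closure D, ∀ s ∈ Icc t₀ t, v y s - w y s ≤ v x τ - w x τ :=
    fun y hy s hs => hmax (show (y, s) ∈ closure D ×ˢ Icc t₀ t from ⟨hy, hs⟩)
  simp only at hxcl hτ
  have hpos : w x τ < v x τ := by
    have := hmax' x₀ hx₀ t ⟨ht'.1.le, le_rfl⟩
    linarith
  have hτ1 : τ < t₁ := hτ.2.trans_lt ht'.2
  have hup1 := hup' x hxcl τ ⟨hτ.1, hτ1.le⟩
  have hxball : ‖x - a‖ ≤ ρ := by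
    have : x ∈ closedBall a ρ := closure_ball_subset_closedBall (closure_mono inter_subset_left hxcl)
    rwa [mem_closedBall, dist_eq_norm] at this
  have hτ0 : t₀ < τ := by
    refine lt_of_le_of_ne hτ.1 fun h => ?_
    have : w x τ = K * (δ x) ^ (1 - β) := by
      simp [hw, ← h, Real.zero_rpow hm0.ne']
    linarith
  have hxlt : ‖x - a‖ < ρ := by
    refine lt_of_le_of_ne hxball fun h => ?_
    have : w x τ = K * (δ x) ^ (1 - β) := by
      simp [hw, h, hρ.ne', Real.zero_rpow hN0.ne']
    linarith
  set P0 := 1 - ‖x - a‖ ^ 2 / ρ ^ 2 with hP0d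
  have hP0 : 0 < P0 := by
    have : ‖x - a‖ ^ 2 / ρ ^ 2 < 1 := by
      rw [div_lt_one (by positivity)]
      exact pow_lt_pow_left₀ hxlt (norm_nonneg _) (by norm_num)
    linarith
  have hP1 : P0 ≤ 1 := by
    have : 0 ≤ ‖x - a‖ ^ 2 / ρ ^ 2 := by positivity
    linarith
  set σ := (τ - t₀) / T with hσ
  have hσ0 : 0 < σ := div_pos (by linarith) hT0
  have hσ1 : σ ≤ 1 := by
    rw [hσ, div_le_one hT0]
    have : 0 < ρ ^ 2 := by positivity
    linarith
  have hxω : x ∈ ω := by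
    by_contra hx
    have hxf : x ∈ frontier ω := by
      rw [hω.frontier_eq]; exact ⟨hDcl hxcl, hx⟩
    have h1 := hbd x hxf τ ⟨hτ0, hτ1⟩
    have h2 : δ x = 0 := by rw [hδ]; exact infDist_zero_of_mem hxf
    have h3 : w x τ = 0 := by
      simp only [hw, ← hP0d, ← hσ, h2, zero_add]
      rw [Real.mul_rpow (by positivity) (by positivity), Real.mul_rpow (by positivity) (by positivity),
        Real.mul_rpow (by positivity) (by positivity), ← Real.rpow_mul hκ.le, ← Real.rpow_mul hσ0.le,
        ← Real.rpow_mul hP0.le, hmβ, hNm, mul_assoc 2, hmβ]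
      simp
    linarith
  have hxD : x ∈ D := ⟨by rwa [mem_ball, dist_eq_norm], hxω⟩
  have hxf : x ∉ frontier ω := by
    rw [hω.frontier_eq]; exact fun h => h.2 hxω
  have hδpos : 0 < δ x := by
    rw [hδ]; exact (isClosed_frontier.notMem_iff_infDist_pos ⟨a, ha⟩).1 hxf
  have hδρ : δ x ≤ ρ := by
    rw [hδ]
    exact (infDist_le_dist_of_mem ha).trans (by rw [dist_eq_norm]; exact hxball)
  have hcd : ∀ y ∈ D, ContDiffAt ℝ 2 δ y := fun y hy =>
    (hδ2.mono subset_closure).contDiffAt (hDo.mem_nhds hy)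
  have hdiff : ∀ y ∈ D, HasFDerivAt δ (fderiv ℝ δ y) y := fun y hy =>
    ((hcd y hy).differentiableAt (by norm_num)).hasFDerivAt
  set g : EuclideanSpace ℝ (Fin n) := (InnerProductSpace.toDual ℝ _).symm (fderiv ℝ δ x) with hgdef
  have hg : ‖g‖ = 1 := by
    rw [hgdef, LinearIsometryEquiv.norm_map]
    exact aux_grad_dist isClosed_frontier ⟨a, ha⟩ hδ hxf (hdiff x hxD)
  have hgi : ∀ i, g i = fderiv ℝ δ x (EuclideanSpace.single i 1) := by
    intro i
    rw [← InnerProductSpace.toDual_symm_apply (𝕜 := ℝ), ← hgdef, EuclideanSpace.inner_single_right]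
    simp
  have hclω : closure ω ∈ nhds x := mem_of_superset (hω.mem_nhds hxω) subset_closure
  have hτI : τ ∈ Icc t₀ t₁ := ⟨hτ.1, hτ1.le⟩
  set M := κ ^ m * ρ * σ ^ m with hM
  set Q := κ * ρ ^ (1 - β) * σ with hQ
  have hM0 : 0 ≤ M := by positivity
  have hline : ∀ i : Fin n, _ := fun i => aux_line (u := fun s => v (x + s • EuclideanSpace.single i (1:ℝ)) τ)
    (u1 := fun s => ⟪Gv (x + s • EuclideanSpace.single i (1:ℝ)) τ, EuclideanSpace.single i (1:ℝ)⟫)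
    (d := fun s => δ (x + s • EuclideanSpace.single i (1:ℝ)))
    (d1 := fun s => fderiv ℝ δ (x + s • EuclideanSpace.single i (1:ℝ)) (EuclideanSpace.single i (1:ℝ)))
    (u2 := ⟪Hv x τ (EuclideanSpace.single i (1:ℝ)), EuclideanSpace.single i (1:ℝ)⟫)
    (d2 := fderiv ℝ (fun y => fderiv ℝ δ y (EuclideanSpace.single i (1 : ℝ))) x
        (EuclideanSpace.single i (1 : ℝ)))
    (K := K) (β := β) (M := M) (N := N) (Q := Q) (P0 := P0) (P1 := -(2 * (x - a) i / ρ ^ 2))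
    (P2 := -(1 / ρ ^ 2)) hM0
  simp only [zero_smul, add_zero] at hline
  have hfin : ∀ i : Fin n, ⟪Gv x τ, EuclideanSpace.single i (1:ℝ)⟫ = K * ((1 - β) * (δ x + M * P0 ^ N) ^ (-β) *
        (fderiv ℝ δ x (EuclideanSpace.single i (1:ℝ)) + M * N * P0 ^ (N - 1) * (-(2 * (x - a) i / ρ ^ 2)))
        - 2 * Q * P0 * (-(2 * (x - a) i / ρ ^ 2))) ∧
      ⟪Hv x τ (EuclideanSpace.single i (1:ℝ)), EuclideanSpace.single i (1:ℝ)⟫ ≤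
      K * ((1 - β) * (-β * (δ x + M * P0 ^ N) ^ (-β - 1) *
        (fderiv ℝ δ x (EuclideanSpace.single i (1:ℝ)) + M * N * P0 ^ (N - 1) * (-(2 * (x - a) i / ρ ^ 2))) ^ 2
        + (δ x + M * P0 ^ N) ^ (-β) *
          (fderiv ℝ (fun y => fderiv ℝ δ y (EuclideanSpace.single i (1 : ℝ))) x
            (EuclideanSpace.single i (1 : ℝ)) + M * N * ((N - 1) * P0 ^ (N - 2) * (-(2 * (x - a) i / ρ ^ 2)) ^ 2
            + 2 * (-(1 / ρ ^ 2)) * P0 ^ (N - 1))))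
        - 2 * Q * ((-(2 * (x - a) i / ρ ^ 2)) ^ 2 + 2 * P0 * (-(1 / ρ ^ 2)))) := by
    intro i
    have hl := hline i
    set e : EuclideanSpace ℝ (Fin n) := EuclideanSpace.single i (1:ℝ) with he
    have hlin : ∀ s : ℝ, HasDerivAt (fun s : ℝ => x + s • e) e s := fun s => by
      simpa using ((hasDerivAt_id s).smul_const e).const_add x
    have hlin0 : x + (0:ℝ) • e = x := by simp
    have hev : ∀ᶠ s in nhds (0:ℝ), x + s • e ∈ D := by
      apply (hlin 0).continuousAt.eventually_mem
      rw [hlin0]; exact hDo.mem_nhds hxD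
    refine hl ?_ ?_ ?_ ?_ hδpos hP0 ?_
    · filter_upwards [hev] with s hs
      have h1 := (hGv τ hτI (x + s • e) (subset_closure hs.2)).hasFDerivWithinAt.hasFDerivAt
        (mem_of_superset (hω.mem_nhds hs.2) subset_closure)
      have h2 := h1.comp_hasDerivAt s (hlin s)
      exact h2.congr_deriv (by simp)
    · have h1 := (hHv τ hτI x (subset_closure hxω)).hasFDerivAt hclω
      rw [← hlin0] at h1
      have h2 := h1.comp_hasDerivAt (0:ℝ) (hlin 0)
      have h3 := h2.inner ℝ (hasDerivAt_const (0:ℝ) e)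
      simpa using h3
    · filter_upwards [hev] with s hs
      exact (hdiff _ hs).comp_hasDerivAt s (hlin s)
    · have h0 : DifferentiableAt ℝ (fderiv ℝ δ) x :=
        ((hcd x hxD).fderiv_right (m := 1) (by norm_num)).differentiableAt (by norm_num)
      have h1 : DifferentiableAt ℝ (fun y => fderiv ℝ δ y e) x := h0.clm_apply (differentiableAt_const e)
      have h2 := h1.hasFDerivAt
      have h3 : HasFDerivAt (fun y => fderiv ℝ δ y e) (fderiv ℝ (fun y => fderiv ℝ δ y e) x) (x + (0:ℝ) • e) := by
        rw [hlin0]; exact h2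
      exact h3.comp_hasDerivAt (0:ℝ) (hlin 0)
    · filter_upwards [hev] with s hs
      have h1 := hmax' (x + s • e) (subset_closure hs) τ hτ
      have h2 : 1 - ‖x + s • e - a‖ ^ 2 / ρ ^ 2 =
          P0 + -(2 * (x - a) i / ρ ^ 2) * s + -(1 / ρ ^ 2) * s ^ 2 := by
        have h3 : ‖x + s • e - a‖ ^ 2 = ‖x - a‖ ^ 2 + 2 * (s * (x - a) i) + s ^ 2 := by
          rw [show x + s • e - a = (x - a) + s • e by abel, norm_add_sq_real, inner_smul_right,
            norm_smul, he, EuclideanSpace.inner_single_right]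
          simp
        rw [h3, hP0d]
        field_simp
        ring
      simp only [hw, h2] at h1
      simpa using h1
  -- time derivative
  have hvt : -(K * κ * ρ ^ (1 - β) / ρ ^ 2) ≤ v' x τ := by
    have h1 := (hv' x (hDcl hxcl) τ hτI).mono (show Ioo t₀ τ ⊆ Icc t₀ t₁ from
      fun s hs => ⟨hs.1.le, hs.2.le.trans hτ1.le⟩)
    rw [hasDerivWithinAt_iff_tendsto_slope' (by simp)] at h1
    have : (nhdsWithin τ (Ioo t₀ τ)).NeBot := by
      rw [nhdsWithin_Ioo_eq_nhdsLT hτ0]; infer_instance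
    refine ge_of_tendsto h1 ?_
    filter_upwards [self_mem_nhdsWithin] with s hs
    have h2 := hmax' x hxcl s ⟨hs.1.le, hs.2.le.trans hτ.2⟩
    rw [slope_def_field, le_div_iff_of_neg (by linarith [hs.2])]
    have hss : (s - t₀) / T ≤ σ := by
      rw [hσ]; gcongr; exact hs.2.le
    have hs0 : 0 ≤ (s - t₀) / T := div_nonneg (by linarith [hs.1]) hT0.le
    have h3 : (δ x + κ ^ m * ρ * ((s - t₀) / T) ^ m * P0 ^ N) ^ (1 - β) ≤
        (δ x + κ ^ m * ρ * σ ^ m * P0 ^ N) ^ (1 - β) := by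
      have := hδ0 x
      gcongr
    have h4 : κ * ρ ^ (1 - β) * P0 ^ 2 * (σ - (s - t₀) / T) ≤ κ * ρ ^ (1 - β) / ρ ^ 2 * (τ - s) := by
      have e1 : σ - (s - t₀) / T = (τ - s) / T := by rw [hσ]; ring
      have hts : 0 ≤ τ - s := by linarith [hs.2]
      rw [e1]
      calc κ * ρ ^ (1 - β) * P0 ^ 2 * ((τ - s) / T) ≤ κ * ρ ^ (1 - β) * 1 * ((τ - s) / ρ ^ 2) := by
            gcongr
            · exact pow_le_one₀ hP0.le hP1
            · linarith
        _ = _ := by ring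
    have h5 := mul_le_mul_of_nonneg_left (add_le_add h3 h4) hK0.le
    simp only [hw, ← hP0d, ← hσ] at h2
    have e3 : -(K * κ * ρ ^ (1 - β) / ρ ^ 2) * (s - τ) = K * (κ * ρ ^ (1 - β) / ρ ^ 2 * (τ - s)) := by ring
    rw [e3]
    linarith
  have hMle : M ≤ κ * ρ := by
    have h1 : κ ^ m ≤ κ := by
      simpa using Real.rpow_le_rpow_of_exponent_ge hκ hκ1 hm1
    have h2 : σ ^ m ≤ 1 := Real.rpow_le_one hσ0.le hσ1 hm0.le
    calc M ≤ κ * ρ * 1 := by rw [hM]; gcongr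
      _ = _ := by ring
  have hQle : Q ≤ κ * ρ ^ (1 - β) := by
    have : 0 ≤ κ * ρ ^ (1 - β) := by positivity
    exact mul_le_of_le_one_right this hσ1
  refine aux_key g (x - a) (Gv x τ) (fun i => ⟪Hv x τ (EuclideanSpace.single i (1:ℝ)), EuclideanSpace.single i (1:ℝ)⟫)
    (fun i => fderiv ℝ (fun y => fderiv ℝ δ y (EuclideanSpace.single i (1 : ℝ))) x
        (EuclideanSpace.single i (1 : ℝ))) hk hβ0 hβ1 hp hβp hK hK0 (by linarith) hκ hκ1 hNκ hρ hconst hg hxball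
    hδpos hδρ hM0 hMle (by positivity) hQle hP0 hP1 (hL x hxD) (fun i => ?_) (fun i => ?_) hvt
    (hsub x hxω τ ⟨hτ0, hτ1⟩)
  · rw [hgi]
    have h1 := (hfin i).1
    rw [EuclideanSpace.inner_single_right] at h1
    simpa using h1
  · rw [hgi]
    exact (hfin i).2

theorem aux_concave {s ε β : ℝ} (hs : 0 < s) (hε : 0 < ε) (hβ0 : 0 < β) (hβ1 : β < 1) :
    (s + ε) ^ (1 - β) - ε ^ (1 - β) ≤ (1 - β) * ε ^ (-β) * s := by
  have h1 : (s + ε) ^ (1 - β) = ε ^ (1 - β) * (1 + s / ε) ^ (1 - β) := by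
    rw [← Real.mul_rpow hε.le (by positivity)]; congr 1; field_simp; ring
  have h2 : (1 + s / ε) ^ (1 - β) ≤ 1 + (1 - β) * (s / ε) :=
    rpow_one_add_le_one_add_mul_self ((by norm_num : (-1:ℝ) ≤ 0).trans (by positivity)) (by linarith) (by linarith)
  have h3 : ε ^ (1 - β) = ε ^ (-β) * ε := by
    rw [← Real.rpow_add_one hε.ne']; congr 1; ring
  have h4 : 0 < ε ^ (-β) := Real.rpow_pos_of_pos hε _
  rw [h1, h3]
  have h5 := mul_le_mul_of_nonneg_left h2 (show 0 ≤ ε ^ (-β) * ε by positivity)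
  have h6 : ε ^ (-β) * ε * (1 + (1 - β) * (s / ε)) = ε ^ (-β) * ε + (1 - β) * ε ^ (-β) * s := by
    field_simp
  linarith

theorem stmt16 {n : ℕ} (hn : 1 ≤ n)
    (p β dp : ℝ) (hp : 2 < p) (hβ : β = 1 / (p - 1)) (hdp : dp = β ^ β)
    (k : ℝ) (hk : k ∈ Ioo 0 dp) :
    -- c = c(n,p,k)
    ∃ c > (0 : ℝ),
    -- ρ₀ = ρ₀(n,p,k,L)
    ∀ L > (0 : ℝ), ∃ ρ₀ > (0 : ℝ),
    ∀ ω : Set (EuclideanSpace ℝ (Fin n)), IsOpen ω → Bornology.IsBounded ω → IsC2Boundary ω →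
    ∀ a ∈ frontier ω, ∀ ρ : ℝ, 0 < ρ → ρ ≤ ρ₀ →
    ∀ δ : EuclideanSpace ℝ (Fin n) → ℝ, (∀ x, δ x = infDist x (frontier ω)) →
    -- δ is C² on the closure of D = B_ρ(a) ∩ ω, with ‖Δδ‖_{L^∞(D)} ≤ L
    ContDiffOn ℝ 2 δ (closure (ball a ρ ∩ ω)) →
    (∀ x ∈ ball a ρ ∩ ω,
      |∑ i : Fin n, fderiv ℝ (fun y => fderiv ℝ δ y (EuclideanSpace.single i (1 : ℝ))) x
        (EuclideanSpace.single i (1 : ℝ))| ≤ L) →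
    -- the inward unit normal field on ∂ω
    ∀ νB : EuclideanSpace ℝ (Fin n) → EuclideanSpace ℝ (Fin n),
    (∀ b ∈ frontier ω, ‖νB b‖ = 1 ∧
      ∃ s₀ > (0 : ℝ), ∀ s ∈ Ioo (0 : ℝ) s₀, b + s • νB b ∈ ω ∧ δ (b + s • νB b) = s) →
    ∀ t₀ t₁ : ℝ, t₀ < t₁ →
    ∀ (v : EuclideanSpace ℝ (Fin n) → ℝ → ℝ) (Gv : EuclideanSpace ℝ (Fin n) → ℝ → EuclideanSpace ℝ (Fin n)) (Hv : EuclideanSpace ℝ (Fin n) → ℝ → (EuclideanSpace ℝ (Fin n) →L[ℝ] EuclideanSpace ℝ (Fin n)))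
      (v' : EuclideanSpace ℝ (Fin n) → ℝ → ℝ),
    -- v, its first and second spatial derivatives and its first time derivative are
    -- continuous on ω̄ × [t₀, t₁]
    ContinuousOn (fun q : EuclideanSpace ℝ (Fin n) × ℝ => (v q.1 q.2, Gv q.1 q.2, Hv q.1 q.2, v' q.1 q.2))
      (closure ω ×ˢ Icc t₀ t₁) →
    (∀ t ∈ Icc t₀ t₁, ∀ x ∈ closure ω,
      HasGradientWithinAt (fun y => v y t) (Gv x t) (closure ω) x) →
    (∀ t ∈ Icc t₀ t₁, ∀ x ∈ closure ω,
      HasFDerivWithinAt (fun y => Gv y t) (Hv x t) (closure ω) x) →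
    (∀ x ∈ closure ω, ∀ t ∈ Icc t₀ t₁,
      HasDerivWithinAt (fun s => v x s) (v' x t) (Icc t₀ t₁) t) →
    -- vₜ - Δv ≤ |∇v|^p in ω × (t₀, t₁)
    (∀ x ∈ ω, ∀ t ∈ Ioo t₀ t₁,
      v' x t - ∑ i : Fin n, ⟪Hv x t (EuclideanSpace.single i (1 : ℝ)),
        EuclideanSpace.single i (1 : ℝ)⟫ ≤ ‖Gv x t‖ ^ p) →
    -- v = 0 on ∂ω × (t₀, t₁)
    (∀ b ∈ frontier ω, ∀ t ∈ Ioo t₀ t₁, v b t = 0) →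
    -- hypothesis (7.7)
    (∀ x ∈ ball a ρ ∩ ω, ∀ t ∈ Ioo t₀ t₁, v x t ≤ (1 - β)⁻¹ * k * (δ x) ^ (1 - β)) →
    -- conclusion
    ∀ b ∈ ball a (ρ / 2) ∩ frontier ω, ∀ t ∈ Ioo t₀ t₁,
      ⟪Gv b t, νB b⟫ ≤ c * ρ ^ (-(1 / (p - 1))) *
        ((t₁ - t₀ + ρ ^ 2) / (t - t₀)) ^ (1 / (p - 2)) := by
  have hp1 : 0 < p - 1 := by linarith
  have hp2 : 0 < p - 2 := by linarith
  have hβ0 : 0 < β := by rw [hβ]; positivity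
  have hβ1 : β < 1 := by rw [hβ, div_lt_one hp1]; linarith
  have hβp1 : β * (p - 1) = 1 := by rw [hβ]; field_simp
  have hβp : β * p = β + 1 := by linarith
  have h1β : 0 < 1 - β := by linarith
  obtain ⟨hk0, hkd⟩ := hk
  set K := (1 - β)⁻¹ * k with hKd
  have hK : K * (1 - β) = k := by rw [hKd]; field_simp
  have hK0 : 0 < K := by positivity
  set m := (p - 1) / (p - 2) with hm
  have hm1 : 1 ≤ m := by rw [hm, one_le_div hp2]; linarith
  have hmβ : m * (1 - β) = 1 := by
    rw [hm, hβ]; field_simp; ring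
  have hmα : m * β = 1 / (p - 2) := by
    rw [hm, hβ]; field_simp
  set N := 2 * m with hN
  have hkp : k ^ p < k * β := by
    have h1 : k ^ (p - 1) < dp ^ (p - 1) := Real.rpow_lt_rpow hk0.le hkd hp1
    have h2 : dp ^ (p - 1) = β := by
      rw [hdp, ← Real.rpow_mul hβ0.le, hβp1, Real.rpow_one]
    have h3 : k ^ p = k * k ^ (p - 1) := by
      rw [mul_comm, ← Real.rpow_add_one hk0.ne']; congr 1; ring
    rw [h3]
    exact mul_lt_mul_of_pos_left (h2 ▸ h1) hk0
  obtain ⟨κ, hκ, hκ1, hNκ, hS⟩ := aux_const N K (4 * K + 8 * k * N * (N - 1) + 16 * n * K)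
    (show 0 < p by linarith) hkp
  set S := k * β * (1 - 2 * N * κ) ^ 2 - (4 * K + 8 * k * N * (N - 1) + 16 * n * K) * κ -
    (k * (1 + 2 * N * κ) + 8 * K * κ) ^ p with hSd
  refine ⟨k * (κ * (9 / 16)) ^ (-(1 / (p - 2))), by positivity, ?_⟩
  intro L hL
  refine ⟨S / (4 * k * L), by positivity, ?_⟩
  intro ω hω _ _ a ha ρ hρ hρ₀ δ hδ hδ2 hLap νB hν t₀ t₁ ht v Gv Hv v' hcont hGv hHv hv' hsub hbd hup
    b hb t ht'
  have hconst : 2 * k * ρ * L < S := by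
    rw [le_div_iff₀ (by positivity)] at hρ₀
    linarith
  have hcmp := aux_compare hk0 hβ0 hβ1 hp hβp hK hK0 hm1 hmβ hN hκ hκ1 hNκ hρ hconst hω ha hδ hδ2 hLap
    ht v Gv Hv v' hcont.fst hGv hHv hv' hsub hbd hup
  obtain ⟨hνn, s₀, hs₀, hνs⟩ := hν b hb.2
  set T := t₁ - t₀ + ρ ^ 2 with hT
  have hT0 : 0 < T := by have : 0 < ρ ^ 2 := by positivity
                         linarith
  have htt : 0 < t - t₀ := by linarith [ht'.1]
  set σ := (t - t₀) / T with hσ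
  have hσ0 : 0 < σ := div_pos htt hT0
  have hTσ : T / (t - t₀) = σ⁻¹ := by rw [hσ, inv_div]
  rw [hTσ]
  have hbcl : b ∈ closure ω := frontier_subset_closure hb.2
  have hbx : b + (0:ℝ) • νB b = b := by simp
  have hlin : HasDerivWithinAt (fun s : ℝ => b + s • νB b) (νB b) (Ioo 0 s₀) 0 := by
    simpa using (((hasDerivAt_id (0:ℝ)).smul_const (νB b)).const_add b).hasDerivWithinAt
  have hd : HasDerivWithinAt (fun s : ℝ => v (b + s • νB b) t) ⟪Gv b t, νB b⟫ (Ioo 0 s₀) 0 := by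
    have h1 := (hGv t ⟨ht'.1.le, ht'.2.le⟩ b hbcl).hasFDerivWithinAt
    rw [← hbx] at h1
    have h2 := h1.comp_hasDerivWithinAt (0:ℝ) hlin (fun s hs => subset_closure (by
      exact (hνs s hs).1))
    exact h2.congr_deriv (by simp)
  rw [hasDerivWithinAt_iff_tendsto_slope' (by simp)] at hd
  have hnb : (nhdsWithin (0:ℝ) (Ioo 0 s₀)).NeBot := by
    rw [nhdsWithin_Ioo_eq_nhdsGT hs₀]; infer_instance
  have hball : ∀ᶠ s in nhdsWithin (0:ℝ) (Ioo 0 s₀), b + s • νB b ∈ ball a (ρ / 2) := by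
    apply hlin.continuousWithinAt.eventually_mem
    simp only [hbx]; exact isOpen_ball.mem_nhds hb.1
  refine le_of_tendsto hd ?_
  filter_upwards [hball, self_mem_nhdsWithin] with s hs1 hs2
  obtain ⟨hxω, hδx⟩ := hνs s hs2
  have hs0 : 0 < s := hs2.1
  rw [slope_def_field, hbx, hbd b hb.2 t ht', sub_zero, sub_zero, div_le_iff₀ hs0]
  set x := b + s • νB b with hx
  have hxa : ‖x - a‖ < ρ / 2 := by rwa [mem_ball, dist_eq_norm] at hs1
  have hc := hcmp x (subset_closure ⟨ball_subset_ball (by linarith) hs1, hxω⟩) t ht'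
  rw [← hσ, hδx] at hc
  set P := 1 - ‖x - a‖ ^ 2 / ρ ^ 2 with hP
  have hP34 : 3 / 4 ≤ P := by
    have h1 : ‖x - a‖ ^ 2 / ρ ^ 2 ≤ 1 / 4 := by
      rw [div_le_iff₀ (by positivity)]
      have := pow_le_pow_left₀ (norm_nonneg _) hxa.le 2
      linarith
    linarith
  have hP0 : 0 < P := by linarith
  set ε := κ ^ m * ρ * σ ^ m * P ^ N with hε
  have hε0 : 0 < ε := by positivity
  have hεE : ε ^ (1 - β) = κ * ρ ^ (1 - β) * σ * P ^ 2 := by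
    rw [hε, Real.mul_rpow (by positivity) (by positivity), Real.mul_rpow (by positivity) (by positivity),
        Real.mul_rpow (by positivity) (by positivity), ← Real.rpow_mul hκ.le, ← Real.rpow_mul hσ0.le,
        ← Real.rpow_mul hP0.le, hmβ, hN, mul_assoc 2, hmβ]
    simp
  rw [← hεE] at hc
  have hcc := mul_le_mul_of_nonneg_left (aux_concave hs0 hε0 hβ0 hβ1) hK0.le
  have hε2 : ε ^ (-β) ≤ (κ * (9 / 16)) ^ (-(1 / (p - 2))) * ρ ^ (-(1 / (p - 1))) * σ⁻¹ ^ (1 / (p - 2)) := by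
    have h1 : ε ^ (-β) ≤ (κ ^ m * ρ * σ ^ m * (3 / 4 : ℝ) ^ N) ^ (-β) := by
      apply Real.rpow_le_rpow_of_nonpos (by positivity) _ (by linarith)
      rw [hε]; gcongr
    refine h1.trans (le_of_eq ?_)
    have e : ∀ y : ℝ, 0 < y → (y ^ m) ^ (-β) = y ^ (-(1 / (p - 2))) := fun y hy => by
      rw [← Real.rpow_mul hy.le, mul_neg, hmα]
    have e2 : (3 / 4 : ℝ) ^ N = (9 / 16 : ℝ) ^ m := by
      rw [hN, Real.rpow_mul (by norm_num)]; norm_num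
    rw [e2, Real.mul_rpow (by positivity) (by positivity), Real.mul_rpow (by positivity) (by positivity),
        Real.mul_rpow (by positivity) (by positivity), e κ hκ, e σ hσ0, e _ (by norm_num),
        Real.mul_rpow hκ.le (by norm_num), Real.inv_rpow hσ0.le, ← Real.rpow_neg hσ0.le, ← hβ]
    ring
  calc v x t ≤ K * ((1 - β) * ε ^ (-β) * s) := hc.trans hcc
    _ = k * ε ^ (-β) * s := by rw [← hK]; ring
    _ ≤ k * ((κ * (9 / 16)) ^ (-(1 / (p - 2))) * ρ ^ (-(1 / (p - 1))) * σ⁻¹ ^ (1 / (p - 2))) * s := by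
        gcongr
    _ = _ := by ring
end
end

section
/- There exists a constant C = C(n, p) > 0 with the following property. Let p > 2, let ω be any open subset of ℝⁿ, x₀ ∈ ∂ω, R > 0, t₀ < t₁, and let v, its first and second spatial derivatives and its first time derivative be continuous on (closure(B_R(x₀)) ∩ closure(ω)) × [t₀, t₁], with v_t − Δv = |∇v|^p in (B_R(x₀) ∩ ω) × (t₀, t₁) and v = 0 on (B_R(x₀) ∩ ∂ω) × (t₀, t₁). If |∇v| ≤ N on (B_R(x₀) ∩ ∂ω) × [t₀, t₁] and |v_t| ≤ M in (B_R(x₀) ∩ ω) × [t₀, t₁] for some M, N > 0, then |∇v(x,t)| ≤ C [N + M^{1/p} + R^{−1/(p−1)} + (t − t₀)^{−1/(2(p−1))}] for all (x,t) ∈ (B_{R/2}(x₀) ∩ ω) × (t₀, t₁). -/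
open Set Metric Filter RealInnerProductSpace

noncomputable section

set_option linter.unusedVariables false

open Topology in
/-- second derivative test: necessary condition -/
lemma second_test {φ φ1 : ℝ → ℝ} {c : ℝ} (hmax : ∀ᶠ s in 𝓝 (0:ℝ), φ s ≤ φ 0)
    (h1 : ∀ᶠ s in 𝓝 (0:ℝ), HasDerivAt φ (φ1 s) s) (h2 : HasDerivAt φ1 c 0) :
    φ1 0 = 0 ∧ c ≤ 0 := by
  have h0 : φ1 0 = 0 := by
    have hm : IsLocalMax φ 0 := hmax
    exact hm.hasDerivAt_eq_zero h1.self_of_nhds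
  refine ⟨h0, ?_⟩
  by_contra hc
  push Not at hc
  have hder : deriv φ =ᶠ[𝓝 0] φ1 := h1.mono fun s hs => hs.deriv
  have hdd : deriv (deriv φ) 0 = c := by
    rw [hder.deriv_eq]; exact h2.deriv
  have hmin : IsLocalMin φ 0 := by
    apply isLocalMin_of_deriv_deriv_pos
    · rw [hdd]; exact hc
    · rw [hder.self_of_nhds, h0]
    · exact h1.self_of_nhds.continuousAt
  have hconst : ∀ᶠ s in 𝓝 (0:ℝ), φ s = φ 0 := by
    filter_upwards [hmax, hmin] with s a b using le_antisymm a b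
  have hz : ∀ᶠ s in 𝓝 (0:ℝ), φ1 s = 0 := by
    filter_upwards [hconst.eventually_nhds, h1] with s hs h1s
    have : HasDerivAt φ 0 s := (hasDerivAt_const s (φ 0)).congr_of_eventuallyEq hs
    exact h1s.unique this
  have : HasDerivAt φ1 0 0 := (hasDerivAt_const (0:ℝ) (0:ℝ)).congr_of_eventuallyEq hz
  have := h2.unique this
  linarith

open Topology in
lemma left_test {φ : ℝ → ℝ} {c t : ℝ} (hmax : ∀ᶠ s in 𝓝 t, s ≤ t → φ s ≤ φ t)
    (h : HasDerivAt φ c t) : 0 ≤ c := by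
  have h1 : Tendsto (slope φ t) (𝓝[<] t) (𝓝 c) :=
    (hasDerivAt_iff_tendsto_slope.1 h).mono_left (nhdsWithin_mono _ (fun x hx => ne_of_lt hx))
  refine ge_of_tendsto h1 ?_
  filter_upwards [self_mem_nhdsWithin, mem_nhdsWithin_of_mem_nhds hmax] with s hs hs2
  rw [slope_def_field]
  have hs' : s < t := hs
  exact div_nonneg_of_nonpos (by have := hs2 hs'.le; linarith) (by linarith)

/-- difference quotient -/
def dq {E : Type*} [AddCommGroup E] [Module ℝ E] (h : ℝ) (e : E) (φ : E → ℝ → ℝ) (x : E) (t : ℝ) : ℝ :=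
  (φ (x + h • e) t - φ x t) / h

lemma line_shift {E : Type*} [NormedAddCommGroup E] [NormedSpace ℝ E] {U : Set E} {e : E}
    {φ φ' : E → ℝ} (hd : ∀ x ∈ U, HasDerivAt (fun s : ℝ => φ (x + s • e)) (φ' x) 0)
    {x : E} {s : ℝ} (hx : x + s • e ∈ U) :
    HasDerivAt (fun s : ℝ => φ (x + s • e)) (φ' (x + s • e)) s := by
  have h := hd _ hx
  have h2 : HasDerivAt (fun r : ℝ => r - s) 1 s := (hasDerivAt_id s).sub_const s
  have h' : HasDerivAt (fun s' : ℝ => φ (x + s • e + s' • e)) (φ' (x + s • e)) (s - s) := by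
    simpa using h
  have h3 := HasDerivAt.comp (h := fun r : ℝ => r - s) s h' h2
  simp only [mul_one] at h3
  refine h3.congr_of_eventuallyEq (Eventually.of_forall fun r => ?_)
  simp only [Function.comp]
  congr 1
  rw [add_assoc, ← add_smul]; congr 2; ring

open Topology in
lemma quot_lim {E : Type*} [NormedAddCommGroup E] [NormedSpace ℝ E] {U : Set E} (hU : IsOpen U)
    {J : Set ℝ} (hJ : IsOpen J) (e : E) (φ φ' : E → ℝ → ℝ)
    (hd : ∀ x ∈ U, ∀ t ∈ J, HasDerivAt (fun s : ℝ => φ (x + s • e) t) (φ' x t) 0)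
    (hc : ContinuousOn (fun q : E × ℝ => φ' q.1 q.2) (U ×ˢ J)) {q : E × ℝ} (hq : q ∈ U ×ˢ J) :
    Tendsto (fun z : (E × ℝ) × ℝ => dq z.2 e φ z.1.1 z.1.2) (𝓝 q ×ˢ 𝓝[>] 0) (𝓝 (φ' q.1 q.2)) := by
  have hopen : IsOpen (U ×ˢ J) := hU.prod hJ
  rw [Metric.tendsto_nhds]
  intro ε hε
  have hS : ∀ᶠ q' in 𝓝 q, q' ∈ U ×ˢ J ∧ dist (φ' q'.1 q'.2) (φ' q.1 q.2) < ε :=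
    Filter.Eventually.and (hopen.mem_nhds hq)
      (Metric.tendsto_nhds.1 (hc.continuousAt (hopen.mem_nhds hq)) ε hε)
  have hcont : Continuous (fun z : (E × ℝ) × ℝ => ((z.1.1 + z.2 • e, z.1.2) : E × ℝ)) := by fun_prop
  have hT : Tendsto (fun z : (E × ℝ) × ℝ => ((z.1.1 + z.2 • e, z.1.2) : E × ℝ)) (𝓝 (q, 0)) (𝓝 q) := by
    have := hcont.tendsto (q, (0:ℝ))
    simpa using this
  obtain ⟨δ, hδ, hball⟩ := Metric.eventually_nhds_iff.1 (hT.eventually hS)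
  have e1 : ∀ᶠ z in 𝓝 q, dist z q < δ := Metric.ball_mem_nhds q hδ
  have e2 : ∀ᶠ h in 𝓝[>] (0:ℝ), 0 < h ∧ h < δ := by
    filter_upwards [Ioo_mem_nhdsGT hδ] with h hh using hh
  filter_upwards [e1.prod_mk e2] with z hz
  obtain ⟨hz1, hz2, hz3⟩ := hz
  have key : ∀ θ ∈ Icc 0 z.2, ((z.1.1 + θ • e, z.1.2) : E × ℝ) ∈ U ×ˢ J ∧
      dist (φ' (z.1.1 + θ • e) z.1.2) (φ' q.1 q.2) < ε := by
    intro θ hθ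
    have := @hball (z.1, θ) (by
      rw [Prod.dist_eq]; refine max_lt hz1 ?_
      simp only [dist_zero_right, Real.norm_eq_abs]
      rw [abs_of_nonneg hθ.1]; exact lt_of_le_of_lt hθ.2 hz3)
    exact this
  have hder : ∀ θ ∈ Icc 0 z.2, HasDerivAt (fun s : ℝ => φ (z.1.1 + s • e) z.1.2)
      (φ' (z.1.1 + θ • e) z.1.2) θ := fun θ hθ =>
    line_shift (U := U) (φ := fun x => φ x z.1.2) (φ' := fun x => φ' x z.1.2)
      (fun x hx => hd x hx _ (key θ hθ).1.2) (key θ hθ).1.1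
  obtain ⟨θ, hθ, hs⟩ := exists_hasDerivAt_eq_slope (fun s : ℝ => φ (z.1.1 + s • e) z.1.2)
    (fun θ => φ' (z.1.1 + θ • e) z.1.2) hz2
    (fun θ hθ => (hder θ hθ).continuousAt.continuousWithinAt)
    (fun θ hθ => hder θ ⟨hθ.1.le, hθ.2.le⟩)
  have : dq z.2 e φ z.1.1 z.1.2 = φ' (z.1.1 + θ • e) z.1.2 := by
    rw [hs]; simp [dq]
  rw [this]
  exact (key θ ⟨hθ.1.le, hθ.2.le⟩).2

lemma dq_deriv {E : Type*} [NormedAddCommGroup E] [NormedSpace ℝ E] {U : Set E}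
    {J : Set ℝ} {e : E} {φ φ' : E → ℝ → ℝ}
    (hd : ∀ x ∈ U, ∀ t ∈ J, HasDerivAt (fun s : ℝ => φ (x + s • e) t) (φ' x t) 0)
    {y e' : E} {h t : ℝ} (hy : y ∈ U) (hy' : y + h • e' ∈ U) (ht : t ∈ J) :
    HasDerivAt (fun s : ℝ => dq h e' φ (y + s • e) t) (dq h e' φ' y t) 0 := by
  unfold dq
  refine HasDerivAt.div_const (HasDerivAt.sub ?_ (hd y hy t ht)) h
  have := hd _ hy' t ht
  refine this.congr_of_eventuallyEq (Filter.Eventually.of_forall fun s => ?_)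
  show φ _ t = φ _ t
  congr 1
  abel

open Topology in
lemma ptwise {E : Type*} [NormedAddCommGroup E] [NormedSpace ℝ E] {n : ℕ} (e : Fin n → E)
    {U : Set E} (hU : IsOpen U) {J : Set ℝ} (hJ : IsOpen J)
    (v : E → ℝ → ℝ) (G : Fin n → E → ℝ → ℝ) (A : Fin n → Fin n → E → ℝ → ℝ) (v' : E → ℝ → ℝ)
    (Q : E → ℝ → ℝ)
    (hv : ∀ i, ∀ x ∈ U, ∀ t ∈ J, HasDerivAt (fun s : ℝ => v (x + s • e i) t) (G i x t) 0)
    (hG : ∀ i j, ∀ x ∈ U, ∀ t ∈ J, HasDerivAt (fun s : ℝ => G j (x + s • e i) t) (A i j x t) 0)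
    (hvt : ∀ x ∈ U, ∀ t ∈ J, HasDerivAt (fun s => v x s) (v' x t) t)
    (heq : ∀ x ∈ U, ∀ t ∈ J, v' x t - ∑ i, A i i x t = Q x t)
    (f : E → ℝ) (f1 f2 : Fin n → E → ℝ) (g g1 : ℝ → ℝ)
    (hf1 : ∀ j, ∀ x ∈ U, HasDerivAt (fun s : ℝ => f (x + s • e j)) (f1 j x) 0)
    (hf2 : ∀ j, ∀ x ∈ U, HasDerivAt (fun s : ℝ => f1 j (x + s • e j)) (f2 j x) 0)
    (hg : ∀ t ∈ J, HasDerivAt g (g1 t) t)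
    {x : E} {t h : ℝ} (hx : x ∈ U) (ht : t ∈ J) (hxi : ∀ i, x + h • e i ∈ U)
    (hmx : ∀ j, ∀ᶠ s in 𝓝 (0:ℝ), ∑ i, (dq h (e i) v (x + s • e j) t) ^ 2 - f (x + s • e j) - g t ≤
      ∑ i, (dq h (e i) v x t) ^ 2 - f x - g t)
    (hmt : ∀ᶠ s in 𝓝 t, s ≤ t → ∑ i, (dq h (e i) v x s) ^ 2 - f x - g s ≤
      ∑ i, (dq h (e i) v x t) ^ 2 - f x - g t) :
    (∀ j, 2 * ∑ i, dq h (e i) v x t * dq h (e i) (G j) x t = f1 j x) ∧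
    g1 t - ∑ j, f2 j x ≤ 2 * ∑ i, dq h (e i) v x t * dq h (e i) Q x t
      - 2 * ∑ i, ∑ j, (dq h (e i) (G j) x t) ^ 2 := by
  have hsp : ∀ j, (∑ i, 2 * dq h (e i) v x t * dq h (e i) (G j) x t - f1 j x = 0) ∧
      (∑ i, (2 * dq h (e i) (G j) x t * dq h (e i) (G j) x t +
        2 * dq h (e i) v x t * dq h (e i) (A j j) x t) - f2 j x ≤ 0) := by
    intro j
    set U' : Set E := U ∩ ⋂ i, (fun y => y + h • e i) ⁻¹' U with hU'
    have hU'o : IsOpen U' := by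
      refine hU.inter (isOpen_iInter_of_finite fun i => hU.preimage (by fun_prop))
    have hmem : ∀ y ∈ U', y ∈ U ∧ ∀ i, y + h • e i ∈ U := by
      intro y hy
      refine ⟨hy.1, fun i => ?_⟩
      exact mem_iInter.1 hy.2 i
    have hxU' : x ∈ U' := ⟨hx, mem_iInter.2 hxi⟩
    have hev : ∀ᶠ s in 𝓝 (0:ℝ), x + s • e j ∈ U' := by
      have : Continuous (fun s : ℝ => x + s • e j) := by fun_prop
      have := this.tendsto 0
      simp only [zero_smul, add_zero] at this
      exact this.eventually (hU'o.mem_nhds hxU')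
    have hd1 : ∀ y ∈ U', HasDerivAt (fun s : ℝ => (fun y => ∑ i, (dq h (e i) v y t) ^ 2 - f y - g t) (y + s • e j))
        ((fun y => ∑ i, 2 * dq h (e i) v y t * dq h (e i) (G j) y t - f1 j y) y) 0 := by
      intro y hy
      obtain ⟨hy1, hy2⟩ := hmem y hy
      refine HasDerivAt.sub_const _ (HasDerivAt.sub (HasDerivAt.fun_sum fun i _ => ?_) (hf1 j y hy1))
      have := (dq_deriv (hv j) hy1 (hy2 i) ht).pow 2
      refine this.congr_deriv ?_
      simp
    have hd2 : HasDerivAt (fun s : ℝ => (fun y => ∑ i, 2 * dq h (e i) v y t * dq h (e i) (G j) y t - f1 j y) (x + s • e j))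
        (∑ i, (2 * dq h (e i) (G j) x t * dq h (e i) (G j) x t +
        2 * dq h (e i) v x t * dq h (e i) (A j j) x t) - f2 j x) 0 := by
      refine HasDerivAt.sub (HasDerivAt.fun_sum fun i _ => ?_) (hf2 j x hx)
      have h1 := (dq_deriv (hv j) hx (hxi i) ht).const_mul 2
      have h2 := (dq_deriv (hG j j) hx (hxi i) ht)
      refine (h1.mul h2).congr_deriv ?_
      simp
    have := second_test (φ := fun s : ℝ => (fun y => ∑ i, (dq h (e i) v y t) ^ 2 - f y - g t) (x + s • e j))
      (by simpa using hmx j) (hev.mono fun s hs => line_shift (φ := fun y => ∑ i, (dq h (e i) v y t) ^ 2 - f y - g t)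
        (φ' := fun y => ∑ i, 2 * dq h (e i) v y t * dq h (e i) (G j) y t - f1 j y) hd1 hs) hd2
    simpa using this
  have hT : 0 ≤ ∑ i, 2 * dq h (e i) v x t * dq h (e i) v' x t - g1 t := by
    refine left_test hmt ?_
    refine HasDerivAt.sub (HasDerivAt.sub_const _ (HasDerivAt.fun_sum fun i _ => ?_)) (hg t ht)
    have : HasDerivAt (fun s => dq h (e i) v x s) (dq h (e i) v' x t) t := by
      unfold dq
      exact ((hvt _ (hxi i) t ht).sub (hvt _ hx t ht)).div_const h
    refine (this.pow 2).congr_deriv ?_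
    simp
  refine ⟨fun j => ?_, ?_⟩
  · have := (hsp j).1
    rw [Finset.mul_sum]
    simp only [← mul_assoc]
    linarith
  · have hs := Finset.sum_le_sum fun j (_ : j ∈ Finset.univ) => (hsp j).2
    rw [Finset.sum_sub_distrib, Finset.sum_comm] at hs
    have hQ : ∀ i, dq h (e i) v' x t = dq h (e i) Q x t + ∑ j, dq h (e i) (A j j) x t := by
      intro i
      simp only [dq]
      rw [← heq _ (hxi i) t ht, ← heq _ hx t ht, ← Finset.sum_div, ← add_div, Finset.sum_sub_distrib]
      congr 1; ring
    simp only [hQ] at hT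
    have e1 : ∑ i, 2 * dq h (e i) v x t * (dq h (e i) Q x t + ∑ j, dq h (e i) (A j j) x t)
        = 2 * ∑ i, dq h (e i) v x t * dq h (e i) Q x t +
          ∑ i, ∑ j, 2 * dq h (e i) v x t * dq h (e i) (A j j) x t := by
      rw [Finset.mul_sum, ← Finset.sum_add_distrib]
      refine Finset.sum_congr rfl fun i _ => ?_
      rw [mul_add, Finset.mul_sum, mul_assoc]
    have e2 : ∑ i, ∑ j, (2 * dq h (e i) (G j) x t * dq h (e i) (G j) x t +
        2 * dq h (e i) v x t * dq h (e i) (A j j) x t) =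
        2 * ∑ i, ∑ j, (dq h (e i) (G j) x t) ^ 2 +
          ∑ i, ∑ j, 2 * dq h (e i) v x t * dq h (e i) (A j j) x t := by
      rw [Finset.mul_sum, ← Finset.sum_add_distrib]
      refine Finset.sum_congr rfl fun i _ => ?_
      rw [Finset.mul_sum, ← Finset.sum_add_distrib]
      refine Finset.sum_congr rfl fun j _ => ?_
      ring
    simp only [Finset.sum_const_zero] at hs
    rw [e1] at hT
    rw [e2] at hs
    linarith

open Topology in
set_option maxHeartbeats 1000000 in
lemma core {E : Type*} [NormedAddCommGroup E] [NormedSpace ℝ E] {n : ℕ} (e : Fin n → E)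
    {U : Set E} (hU : IsOpen U) {J : Set ℝ} (hJ : IsOpen J)
    (v : E → ℝ → ℝ) (G : Fin n → E → ℝ → ℝ) (A : Fin n → Fin n → E → ℝ → ℝ) (v' : E → ℝ → ℝ)
    (Q : E → ℝ → ℝ) (Q' : Fin n → E → ℝ → ℝ)
    (hv : ∀ i, ∀ x ∈ U, ∀ t ∈ J, HasDerivAt (fun s : ℝ => v (x + s • e i) t) (G i x t) 0)
    (hG : ∀ i j, ∀ x ∈ U, ∀ t ∈ J, HasDerivAt (fun s : ℝ => G j (x + s • e i) t) (A i j x t) 0)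
    (hQ : ∀ i, ∀ x ∈ U, ∀ t ∈ J, HasDerivAt (fun s : ℝ => Q (x + s • e i) t) (Q' i x t) 0)
    (hvt : ∀ x ∈ U, ∀ t ∈ J, HasDerivAt (fun s => v x s) (v' x t) t)
    (heq : ∀ x ∈ U, ∀ t ∈ J, v' x t - ∑ i, A i i x t = Q x t)
    (hvc : ContinuousOn (fun q : E × ℝ => v q.1 q.2) (U ×ˢ J))
    (hGc : ∀ i, ContinuousOn (fun q : E × ℝ => G i q.1 q.2) (U ×ˢ J))
    (hAc : ∀ i j, ContinuousOn (fun q : E × ℝ => A i j q.1 q.2) (U ×ˢ J))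
    (hQc : ∀ i, ContinuousOn (fun q : E × ℝ => Q' i q.1 q.2) (U ×ˢ J))
    (f : E → ℝ) (f1 f2 : Fin n → E → ℝ) (g g1 : ℝ → ℝ)
    (hf1 : ∀ j, ∀ x ∈ U, HasDerivAt (fun s : ℝ => f (x + s • e j)) (f1 j x) 0)
    (hf2 : ∀ j, ∀ x ∈ U, HasDerivAt (fun s : ℝ => f1 j (x + s • e j)) (f2 j x) 0)
    (hg : ∀ t ∈ J, HasDerivAt g (g1 t) t)
    (hfc : ContinuousOn f U) (hf1c : ∀ j, ContinuousOn (f1 j) U) (hf2c : ∀ j, ContinuousOn (f2 j) U)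
    (hg1c : ContinuousOn g1 J)
    {K : Set (E × ℝ)} (hK : IsCompact K) (hKU : K ⊆ U ×ˢ J) (m : ℝ)
    (hop : ∀ q ∈ K, m < ∑ i, (G i q.1 q.2) ^ 2 - f q.1 - g q.2 →
      ∀ᶠ q' in 𝓝 q, q'.2 ≤ q.2 → q' ∈ K)
    (hex : ∃ q ∈ K, m < ∑ i, (G i q.1 q.2) ^ 2 - f q.1 - g q.2) :
    ∃ q ∈ K, (∀ j, 2 * ∑ i, G i q.1 q.2 * A i j q.1 q.2 = f1 j q.1) ∧
      g1 q.2 - ∑ j, f2 j q.1 ≤ 2 * ∑ i, G i q.1 q.2 * Q' i q.1 q.2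
      - 2 * ∑ i, ∑ j, (A i j q.1 q.2) ^ 2 := by
  obtain ⟨q₀, hq₀K, hq₀m⟩ := hex
  have hopen : IsOpen (U ×ˢ J) := hU.prod hJ
  have hgc : ContinuousOn g J := fun t ht => (hg t ht).continuousAt.continuousWithinAt
  -- small h keeps us inside
  have hsmall : ∀ᶠ h in 𝓝[>] (0:ℝ), ∀ q ∈ K, ∀ i, q.1 + h • e i ∈ U := by
    have hloc : ∀ i, ∀ᶠ h in 𝓝 (0:ℝ), ∀ q ∈ K, q.1 + h • e i ∈ U := by
      intro i
      apply hK.eventually_forall_of_forall_eventually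
      intro q hq
      have hc : Continuous (fun z : (E × ℝ) × ℝ => z.1.1 + z.2 • e i) := by fun_prop
      have ht := hc.tendsto (q, (0:ℝ))
      simp only [zero_smul, add_zero] at ht
      have := ht.eventually (hU.mem_nhds (hKU hq).1)
      first
        | exact this
        | exact (continuous_swap.tendsto ((0:ℝ), q)).eventually this
    have := (eventually_all.2 hloc).filter_mono (nhdsWithin_le_nhds (s := Ioi 0))
    filter_upwards [this] with h hh q hq i using hh i q hq
  have hcontF : ∀ h, (∀ q ∈ K, ∀ i, q.1 + h • e i ∈ U) →
      ContinuousOn (fun q : E × ℝ => ∑ i, (dq h (e i) v q.1 q.2) ^ 2 - f q.1 - g q.2) K := by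
    intro h hh
    refine ((continuousOn_finsetSum _ fun i _ => ContinuousOn.pow ?_ 2).sub ?_).sub ?_
    · unfold dq
      refine ContinuousOn.div_const (ContinuousOn.sub ?_ (hvc.mono hKU)) h
      exact hvc.comp (f := fun q : E × ℝ => ((q.1 + h • e i, q.2) : E × ℝ)) (by fun_prop)
        (fun q hq => ⟨hh q hq i, (hKU hq).2⟩)
    · exact hfc.comp (by fun_prop) fun q hq => (hKU hq).1
    · exact hgc.comp (by fun_prop) fun q hq => (hKU hq).2
  have hmaxex : ∀ᶠ h in 𝓝[>] (0:ℝ), ∃ q ∈ K, IsMaxOn (fun q : E × ℝ => ∑ i, (dq h (e i) v q.1 q.2) ^ 2 - f q.1 - g q.2) K q := by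
    filter_upwards [hsmall] with h hh
    exact hK.exists_isMaxOn ⟨q₀, hq₀K⟩ (hcontF h hh)
  have : ∃ q : ℝ → E × ℝ, ∀ᶠ h in 𝓝[>] (0:ℝ), q h ∈ K ∧ IsMaxOn (fun q : E × ℝ => ∑ i, (dq h (e i) v q.1 q.2) ^ 2 - f q.1 - g q.2) K (q h) := by
    classical
    refine ⟨fun h => if hh : ∃ q ∈ K, IsMaxOn (fun q : E × ℝ => ∑ i, (dq h (e i) v q.1 q.2) ^ 2 - f q.1 - g q.2) K q then hh.choose else q₀, ?_⟩
    filter_upwards [hmaxex] with h hh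
    simp only [hh, dif_pos]
    exact hh.choose_spec
  obtain ⟨q, hq⟩ := this
  obtain ⟨𝓕, hF⟩ : ∃ 𝓕 : Ultrafilter ℝ, (𝓕 : Filter ℝ) ≤ 𝓝[>] (0:ℝ) := ⟨_, Ultrafilter.of_le _⟩
  have hqF : ∀ᶠ h in (𝓕 : Filter ℝ), q h ∈ K := (hq.mono fun h hh => hh.1).filter_mono hF
  obtain ⟨z, hzK, hz⟩ := hK.ultrafilter_le_nhds (𝓕.map q) (by
    rw [le_principal_iff]; exact hqF)
  have hz' : Tendsto q 𝓕 (𝓝 z) := hz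
  have hzU := hKU hzK
  have hpair : Tendsto (fun h => (q h, h)) 𝓕 (𝓝 z ×ˢ 𝓝[>] 0) := hz'.prodMk hF
  have lim : ∀ (i : Fin n) (φ φ' : E → ℝ → ℝ), 
      (∀ x ∈ U, ∀ t ∈ J, HasDerivAt (fun s : ℝ => φ (x + s • e i) t) (φ' x t) 0) →
      ContinuousOn (fun q : E × ℝ => φ' q.1 q.2) (U ×ˢ J) →
      Tendsto (fun h => dq h (e i) φ (q h).1 (q h).2) 𝓕 (𝓝 (φ' z.1 z.2)) := by
    intro i φ φ' h1 h2
    have h3 := quot_lim hU hJ (e i) φ φ' h1 h2 hzU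
    have h4 := Tendsto.comp h3 hpair
    simpa only [Function.comp_def] using h4
  have lim0 : ∀ (y : E × ℝ), y ∈ K → ∀ (i : Fin n),
      Tendsto (fun h => dq h (e i) v y.1 y.2) 𝓕 (𝓝 (G i y.1 y.2)) := by
    intro y hy i
    have hp : Tendsto (fun h : ℝ => (y, h)) 𝓕 (𝓝 y ×ˢ 𝓝[>] 0) := tendsto_const_nhds.prodMk hF
    have h3 := quot_lim hU hJ (e i) v (G i) (hv i) (hGc i) (hKU hy)
    have h4 := Tendsto.comp h3 hp
    simpa only [Function.comp_def] using h4
  have hz1 : Tendsto (fun h => (q h).1) 𝓕 (𝓝 z.1) := (continuous_fst.tendsto z).comp hz'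
  have hz2 : Tendsto (fun h => (q h).2) 𝓕 (𝓝 z.2) := (continuous_snd.tendsto z).comp hz'
  have cU : ∀ φ : E → ℝ, ContinuousOn φ U → Tendsto (fun h => φ (q h).1) 𝓕 (𝓝 (φ z.1)) :=
    fun φ hφ => (hφ.continuousAt (hU.mem_nhds hzU.1)).tendsto.comp hz1
  have cJ : ∀ φ : ℝ → ℝ, ContinuousOn φ J → Tendsto (fun h => φ (q h).2) 𝓕 (𝓝 (φ z.2)) :=
    fun φ hφ => (hφ.continuousAt (hJ.mem_nhds hzU.2)).tendsto.comp hz2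
  -- z beats q₀
  have hbeat : m < ∑ i, (G i z.1 z.2) ^ 2 - f z.1 - g z.2 := by
    refine lt_of_lt_of_le hq₀m ?_
    have l1 : Tendsto (fun h => ∑ i, (dq h (e i) v q₀.1 q₀.2) ^ 2 - f q₀.1 - g q₀.2) 𝓕
        (𝓝 (∑ i, (G i q₀.1 q₀.2) ^ 2 - f q₀.1 - g q₀.2)) :=
      ((tendsto_finsetSum _ fun i _ => (lim0 q₀ hq₀K i).pow 2).sub_const _).sub_const _
    have l2 : Tendsto (fun h => ∑ i, (dq h (e i) v (q h).1 (q h).2) ^ 2 - f (q h).1 - g (q h).2) 𝓕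
        (𝓝 (∑ i, (G i z.1 z.2) ^ 2 - f z.1 - g z.2)) :=
      ((tendsto_finsetSum _ fun i _ => (lim i v (G i) (hv i) (hGc i)).pow 2).sub (cU f hfc)).sub (cJ g hgc)
    refine le_of_tendsto_of_tendsto l1 l2 ?_
    filter_upwards [hq.filter_mono hF] with h hh
    exact isMaxOn_iff.1 hh.2 _ hq₀K
  have hFc : ContinuousAt (fun q : E × ℝ => ∑ i, (G i q.1 q.2) ^ 2 - f q.1 - g q.2) z := by
    refine ContinuousOn.continuousAt (s := U ×ˢ J) ?_ (hopen.mem_nhds hzU)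
    refine ((continuousOn_finsetSum _ fun i _ => (hGc i).pow 2).sub ?_).sub ?_
    · exact hfc.comp (by fun_prop) fun q hq => hq.1
    · exact hgc.comp (by fun_prop) fun q hq => hq.2
  have hgt : ∀ᶠ h in (𝓕 : Filter ℝ), m < ∑ i, (G i (q h).1 (q h).2) ^ 2 - f (q h).1 - g (q h).2 :=
    (hFc.tendsto.comp hz').eventually (lt_mem_nhds hbeat)
  have hfin : ∀ᶠ h in (𝓕 : Filter ℝ),
      (∀ j, 2 * ∑ i, dq h (e i) v (q h).1 (q h).2 * dq h (e i) (G j) (q h).1 (q h).2 = f1 j (q h).1) ∧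
      g1 (q h).2 - ∑ j, f2 j (q h).1 ≤ 2 * ∑ i, dq h (e i) v (q h).1 (q h).2 * dq h (e i) Q (q h).1 (q h).2
      - 2 * ∑ i, ∑ j, (dq h (e i) (G j) (q h).1 (q h).2) ^ 2 := by
    filter_upwards [hgt, hq.filter_mono hF, hsmall.filter_mono hF] with h h1 h2 h3
    have hin := hop (q h) h2.1 h1
    refine ptwise e hU hJ v G A v' Q hv hG hvt heq f f1 f2 g g1 hf1 hf2 hg (hKU h2.1).1 (hKU h2.1).2
      (h3 _ h2.1) ?_ ?_
    · intro j
      have hc : Continuous (fun s : ℝ => (((q h).1 + s • e j, (q h).2) : E × ℝ)) := by fun_prop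
      have ht := hc.tendsto 0
      simp only [zero_smul, add_zero] at ht
      filter_upwards [ht.eventually hin] with s hs
      have h4 := isMaxOn_iff.1 h2.2 _ (hs le_rfl)
      simpa only using h4
    · have hc : Continuous (fun s : ℝ => (((q h).1, s) : E × ℝ)) := by fun_prop
      have ht := hc.tendsto (q h).2
      filter_upwards [ht.eventually hin] with s hs hst
      have h4 := isMaxOn_iff.1 h2.2 _ (hs hst)
      simpa only using h4
  refine ⟨z, hzK, fun j => ?_, ?_⟩
  · refine tendsto_nhds_unique (f := fun h => f1 j (q h).1) (l := (𝓕 : Filter ℝ)) ?_ (cU _ (hf1c j))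
    refine Tendsto.congr' (hfin.mono fun h hh => hh.1 j) ?_
    exact (tendsto_finsetSum _ fun i _ =>
      (lim i v (G i) (hv i) (hGc i)).mul (lim i (G j) (A i j) (hG i j) (hAc i j))).const_mul 2
  · refine le_of_tendsto_of_tendsto ?_ ?_ (hfin.mono fun h hh => hh.2)
    · exact (cJ _ hg1c).sub (tendsto_finsetSum _ fun j _ => cU _ (hf2c j))
    · exact ((tendsto_finsetSum _ fun i _ =>
        (lim i v (G i) (hv i) (hGc i)).mul (lim i Q (Q' i) (hQ i) (hQc i))).const_mul 2).sub
        ((tendsto_finsetSum _ fun i _ => tendsto_finsetSum _ fun j _ =>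
          (lim i (G j) (A i j) (hG i j) (hAc i j)).pow 2).const_mul 2)

open Real in
lemma final_alg {n : ℕ} (hn : 1 ≤ n) {p a A R d W τ M v1 : ℝ} (hp : 2 < p) (ha : a = 2 / (p - 1))
    (hA0 : 0 < A) (hR : 0 < R) (hd0 : 0 < d) (hdR : d ≤ R ^ 2) (hτ : 0 < τ) (hW : 0 < W)
    (y G : Fin n → ℝ) (H : Fin n → Fin n → ℝ)
    (hy : ∑ j, y j ^ 2 ≤ R ^ 2) (hGW : ∑ j, G j ^ 2 = W)
    (hf : A * R ^ a * d ^ (-a) ≤ W) (hg : A * τ ^ (-(1 / (p - 1))) ≤ W)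
    (hM : 2 * M ≤ W ^ (p / 2)) (hv : |v1| ≤ M) (heq : v1 - ∑ i, H i i = W ^ (p / 2))
    (h1 : ∀ j, 2 * ∑ i, G i * H i j = A * R ^ a * (2 * a * d ^ (-a - 1) * y j))
    (h2 : A * (-(1 / (p - 1)) * τ ^ (-(1 / (p - 1)) - 1)) -
      ∑ j, A * R ^ a * (4 * a * (a + 1) * d ^ (-a - 2) * y j ^ 2 + 2 * a * d ^ (-a - 1)) ≤
      2 * ∑ i, G i * (p * W ^ (p / 2 - 1) * ∑ j, G j * H i j) - 2 * ∑ i, ∑ j, H i j ^ 2)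
    (hA : 2 * a * p * A ^ (-(p - 1) / 2) + (4 * a * (a + 1) + 2 * a * n) * A ^ (1 - p)
      + (1 / (p - 1)) * A ^ (1 - p) < 1 / (2 * n)) : False := by
  have hn0 : (0:ℝ) < n := by exact_mod_cast hn
  have hp1 : 0 < p - 1 := by linarith
  have ha0 : 0 < a := by rw [ha]; positivity
  have hap : a * p = a + 2 := by rw [ha]; field_simp; ring
  have hap2 : a * ((p + 1) / 2) = a + 1 := by rw [ha]; field_simp; ring
  set X := R ^ a * d ^ (-a) with hX
  have hX0 : 0 < X := by positivity
  have hXW : X ≤ W / A := by rw [le_div_iff₀ hA0]; linarith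
  have hXp : X ^ p = R ^ (a + 2) * d ^ (-a - 2) := by
    rw [hX, mul_rpow (by positivity) (by positivity), ← rpow_mul hR.le, ← rpow_mul hd0.le, hap]
    congr 2; linarith
  have hXp2 : X ^ ((p + 1) / 2) = R ^ (a + 1) * d ^ (-a - 1) := by
    rw [hX, mul_rpow (by positivity) (by positivity), ← rpow_mul hR.le, ← rpow_mul hd0.le, hap2]
    congr 2; linarith
  have hB : X ^ p ≤ (W / A) ^ p := rpow_le_rpow hX0.le hXW (by linarith)
  have hB2 : X ^ ((p + 1) / 2) ≤ (W / A) ^ ((p + 1) / 2) := rpow_le_rpow hX0.le hXW (by linarith)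
  have hAW : A * (W / A) ^ p = A ^ (1 - p) * W ^ p := by
    rw [div_rpow hW.le hA0.le, rpow_sub hA0, rpow_one]; ring
  have hAW2 : A * (W / A) ^ ((p + 1) / 2) * W ^ ((p - 1) / 2) = A ^ (-(p - 1) / 2) * W ^ p := by
    rw [div_rpow hW.le hA0.le, show -(p - 1) / 2 = 1 - (p + 1) / 2 by ring, rpow_sub hA0, rpow_one,
      show p = (p + 1) / 2 + (p - 1) / 2 by ring, rpow_add hW]
    ring_nf
  have hτp : A * τ ^ (-(1 / (p - 1)) - 1) ≤ A ^ (1 - p) * W ^ p := by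
    rw [← hAW]
    have : τ ^ (-(1 / (p - 1)) - 1) = (τ ^ (-(1 / (p - 1)))) ^ p := by
      rw [← rpow_mul hτ.le]; congr 1; field_simp; ring
    rw [this]
    refine mul_le_mul_of_nonneg_left (rpow_le_rpow (by positivity) ?_ (by linarith)) hA0.le
    rw [le_div_iff₀ hA0]; linarith
  -- second order term
  have hR2 : R ^ (a + 2) = R ^ a * R ^ 2 := by rw [rpow_add hR]; norm_num
  have hR1 : R ^ (a + 1) = R ^ a * R := by rw [rpow_add hR, rpow_one]
  have hdd : d ^ (-a - 1) = d ^ (-a - 2) * d := by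
    rw [show -a - 1 = (-a - 2) + 1 by ring, rpow_add hd0, rpow_one]
  have hsum : ∑ j, A * R ^ a * (4 * a * (a + 1) * d ^ (-a - 2) * y j ^ 2 + 2 * a * d ^ (-a - 1)) ≤
      (4 * a * (a + 1) + 2 * a * n) * (A ^ (1 - p) * W ^ p) := by
    have e : ∑ j, A * R ^ a * (4 * a * (a + 1) * d ^ (-a - 2) * y j ^ 2 + 2 * a * d ^ (-a - 1)) =
        A * R ^ a * (4 * a * (a + 1) * d ^ (-a - 2) * ∑ j, y j ^ 2) +
          n * (A * R ^ a * (2 * a * d ^ (-a - 1))) := by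
      simp only [mul_add, Finset.sum_add_distrib, Finset.mul_sum, Finset.sum_const, Finset.card_univ,
        Fintype.card_fin, nsmul_eq_mul]
    rw [e, ← hAW]
    calc _ ≤ A * R ^ a * (4 * a * (a + 1) * d ^ (-a - 2) * R ^ 2) +
          n * (A * R ^ a * (2 * a * (d ^ (-a - 2) * R ^ 2))) := by
          rw [hdd]
          gcongr
      _ = (4 * a * (a + 1) + 2 * a * n) * (A * X ^ p) := by rw [hXp, hR2]; ring
      _ ≤ _ := by gcongr
  -- gradient term
  have hgrad : 2 * ∑ i, G i * (p * W ^ (p / 2 - 1) * ∑ j, G j * H i j) ≤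
      2 * a * p * (A ^ (-(p - 1) / 2) * W ^ p) := by
    have e : 2 * ∑ i, G i * (p * W ^ (p / 2 - 1) * ∑ j, G j * H i j) =
        p * W ^ (p / 2 - 1) * ∑ j, G j * (2 * ∑ i, G i * H i j) := by
      simp only [Finset.mul_sum]
      rw [Finset.sum_comm]
      refine Finset.sum_congr rfl fun i _ => Finset.sum_congr rfl fun j _ => ?_
      ring
    have e' : ∑ j, G j * (2 * ∑ i, G i * H i j) = A * R ^ a * (2 * a * d ^ (-a - 1)) * ∑ j, G j * y j := by
      rw [Finset.mul_sum]
      refine Finset.sum_congr rfl fun j _ => ?_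
      rw [h1 j]; ring
    have cs : ∑ j, G j * y j ≤ W ^ (1 / 2 : ℝ) * R := by
      refine le_of_sq_le_sq ?_ (by positivity)
      calc (∑ j, G j * y j) ^ 2 ≤ (∑ j, G j ^ 2) * ∑ j, y j ^ 2 := Finset.sum_mul_sq_le_sq_mul_sq _ _ _
        _ ≤ W * R ^ 2 := by rw [hGW]; gcongr
        _ = _ := by
          rw [mul_pow, ← rpow_natCast (W ^ (1 / 2 : ℝ)), ← rpow_mul hW.le]; norm_num
    rw [e, e', ← hAW2]
    calc _ ≤ p * W ^ (p / 2 - 1) * (A * R ^ a * (2 * a * d ^ (-a - 1)) * (W ^ (1 / 2 : ℝ) * R)) := by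
          gcongr
      _ = 2 * a * p * (A * X ^ ((p + 1) / 2) * W ^ ((p - 1) / 2)) := by
          rw [hXp2, hR1, show (p - 1) / 2 = (p / 2 - 1) + 1 / 2 by ring, rpow_add hW]; ring
      _ ≤ _ := by gcongr
  -- Hessian
  have hhess : W ^ p / (2 * n) ≤ 2 * ∑ i, ∑ j, H i j ^ 2 := by
    have d1 : ∑ i, H i i ^ 2 ≤ ∑ i, ∑ j, H i j ^ 2 := by
      refine Finset.sum_le_sum fun i _ => ?_
      exact Finset.single_le_sum (f := fun j => H i j ^ 2) (fun j _ => sq_nonneg _) (Finset.mem_univ i)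
    have d2 : (∑ i, H i i) ^ 2 ≤ n * ∑ i, H i i ^ 2 := by
      have := sq_sum_le_card_mul_sum_sq (s := Finset.univ) (f := fun i => H i i)
      simpa using this
    have d3 : W ^ p = (W ^ (p / 2)) ^ 2 := by
      rw [← rpow_natCast, ← rpow_mul hW.le]; congr 1; push_cast; ring
    have d4 : W ^ (p / 2) / 2 ≤ -∑ i, H i i := by
      have := (abs_le.1 hv).2
      linarith
    have d5 : (W ^ (p / 2) / 2) ^ 2 ≤ (∑ i, H i i) ^ 2 := by
      rw [← neg_sq (∑ i, H i i)]
      exact pow_le_pow_left₀ (by positivity) d4 2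
    rw [div_le_iff₀ (by positivity), d3]
    have d6 := mul_le_mul_of_nonneg_left d1 hn0.le
    linarith
  have hWp : 0 < W ^ p := by positivity
  have hfinal := mul_lt_mul_of_pos_right hA hWp
  have hpp : 0 < 1 / (p - 1) := by positivity
  have hτ2 := mul_le_mul_of_nonneg_left hτp hpp.le
  have : 1 / (2 * n) * W ^ p = W ^ p / (2 * n) := by ring
  have e1 : A * (-(1 / (p - 1)) * τ ^ (-(1 / (p - 1)) - 1)) =
      -(1 / (p - 1) * (A * τ ^ (-(1 / (p - 1)) - 1))) := by ring
  rw [e1] at h2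
  linarith

open Topology in
lemma exists_A {n : ℕ} (hn : 1 ≤ n) {p a : ℝ} (hp : 2 < p) : ∃ A : ℝ, 0 < A ∧
    2 * a * p * A ^ (-(p - 1) / 2) + (4 * a * (a + 1) + 2 * a * n) * A ^ (1 - p)
      + (1 / (p - 1)) * A ^ (1 - p) < 1 / (2 * n) := by
  have hn0 : (0:ℝ) < n := by exact_mod_cast hn
  have l1 : Tendsto (fun A : ℝ => A ^ (-(p - 1) / 2)) atTop (𝓝 0) := by
    have := tendsto_rpow_neg_atTop (y := (p - 1) / 2) (by linarith)
    simpa only [neg_div] using this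
  have l2 : Tendsto (fun A : ℝ => A ^ (1 - p)) atTop (𝓝 0) := by
    have := tendsto_rpow_neg_atTop (y := p - 1) (by linarith)
    simpa only [neg_sub] using this
  have l := ((l1.const_mul (2 * a * p)).add (l2.const_mul (4 * a * (a + 1) + 2 * a * n))).add
    (l2.const_mul (1 / (p - 1)))
  simp only [mul_zero, add_zero] at l
  have hpos : (0:ℝ) < 1 / (2 * n) := by positivity
  obtain ⟨A, h1, h2⟩ := ((eventually_gt_atTop 0).and (l.eventually (gt_mem_nhds hpos))).exists
  exact ⟨A, h1, h2⟩

lemma dist_line {n : ℕ} (x₀ x : EuclideanSpace ℝ (Fin n)) (R : ℝ) (j : Fin n) :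
    HasDerivAt (fun s : ℝ => R ^ 2 - ‖x + s • EuclideanSpace.single j (1:ℝ) - x₀‖ ^ 2)
      (-2 * (x - x₀) j) 0 := by
  have h1 : HasDerivAt (fun s : ℝ => x + s • EuclideanSpace.single j (1:ℝ) - x₀)
      (EuclideanSpace.single j (1:ℝ)) 0 := by
    have := (((hasDerivAt_id (0:ℝ)).smul_const (EuclideanSpace.single j (1:ℝ))).const_add x).sub_const x₀
    simpa using this
  have h2 := (h1.norm_sq).const_sub (R ^ 2)
  refine h2.congr_deriv ?_
  simp [EuclideanSpace.inner_single_right]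

lemma barrier_deriv {n : ℕ} (x₀ : EuclideanSpace ℝ (Fin n)) (R A a : ℝ) (j : Fin n)
    (x : EuclideanSpace ℝ (Fin n)) (hx : 0 < R ^ 2 - ‖x - x₀‖ ^ 2) :
    HasDerivAt (fun s : ℝ => A * R ^ a * (R ^ 2 - ‖x + s • EuclideanSpace.single j (1:ℝ) - x₀‖ ^ 2) ^ (-a))
      (A * R ^ a * (2 * a * (R ^ 2 - ‖x - x₀‖ ^ 2) ^ (-a - 1) * (x - x₀) j)) 0 := by
  have h := (dist_line x₀ x R j).rpow_const (p := -a) (Or.inl (by simpa using hx.ne'))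
  refine (h.const_mul (A * R ^ a)).congr_deriv ?_
  simp only [zero_smul, add_zero]
  ring

lemma barrier_deriv2 {n : ℕ} (x₀ : EuclideanSpace ℝ (Fin n)) (R A a : ℝ) (j : Fin n)
    (x : EuclideanSpace ℝ (Fin n)) (hx : 0 < R ^ 2 - ‖x - x₀‖ ^ 2) :
    HasDerivAt (fun s : ℝ => A * R ^ a * (2 * a * (R ^ 2 - ‖x + s • EuclideanSpace.single j (1:ℝ) - x₀‖ ^ 2) ^ (-a - 1)
        * (x + s • EuclideanSpace.single j (1:ℝ) - x₀) j))
      (A * R ^ a * (4 * a * (a + 1) * (R ^ 2 - ‖x - x₀‖ ^ 2) ^ (-a - 2) * (x - x₀) j ^ 2 +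
        2 * a * (R ^ 2 - ‖x - x₀‖ ^ 2) ^ (-a - 1))) 0 := by
  have h := ((dist_line x₀ x R j).rpow_const (p := -a - 1) (Or.inl (by simpa using hx.ne'))).const_mul (2 * a)
  have h1 : HasDerivAt (fun s : ℝ => (x + s • EuclideanSpace.single j (1:ℝ) - x₀) j) 1 0 := by
    have : HasDerivAt (fun s : ℝ => x j + s - x₀ j) 1 0 :=
      ((hasDerivAt_id (0:ℝ)).const_add (x j)).sub_const (x₀ j)
    refine this.congr_of_eventuallyEq (Filter.Eventually.of_forall fun s => ?_)
    simp
  refine ((h.mul h1).const_mul (A * R ^ a)).congr_deriv ?_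
  simp only [zero_smul, add_zero]
  rw [show -a - 1 - 1 = -a - 2 by ring]
  ring

open Topology in
lemma blowup {c b B D : ℝ} (hc : 0 < c) (hb : 0 < b) (hD : 0 < D) :
    ∃ d₀, 0 < d₀ ∧ ∀ d, 0 < d → d < d₀ → B < c * d ^ (-b) := by
  have h : Tendsto (fun d : ℝ => c * d ^ (-b)) (𝓝[>] 0) atTop :=
    (tendsto_rpow_neg_nhdsGT_zero (by linarith)).const_mul_atTop hc
  have := h.eventually (eventually_gt_atTop B)
  obtain ⟨u, hu, hh⟩ := mem_nhdsGT_iff_exists_Ioo_subset.1 this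
  exact ⟨u, hu, fun d h1 h2 => hh ⟨h1, h2⟩⟩

/-- The Bernstein bound for the squared gradient. -/
lemma bern {n : ℕ} (hn : 1 ≤ n) {p a A : ℝ} (hp : 2 < p) (ha : a = 2 / (p - 1)) (hA0 : 0 < A)
    (hA : 2 * a * p * A ^ (-(p - 1) / 2) + (4 * a * (a + 1) + 2 * a * n) * A ^ (1 - p)
      + (1 / (p - 1)) * A ^ (1 - p) < 1 / (2 * n))
    (ω : Set (EuclideanSpace ℝ (Fin n))) (hω : IsOpen ω)
    (x₀ : EuclideanSpace ℝ (Fin n)) (R : ℝ) (hR : 0 < R) (t₀ t₁ : ℝ)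
    (v : EuclideanSpace ℝ (Fin n) → ℝ → ℝ) (Gv : EuclideanSpace ℝ (Fin n) → ℝ → EuclideanSpace ℝ (Fin n)) (Hv : EuclideanSpace ℝ (Fin n) → ℝ → (EuclideanSpace ℝ (Fin n) →L[ℝ] EuclideanSpace ℝ (Fin n)))
      (v' : EuclideanSpace ℝ (Fin n) → ℝ → ℝ)
    (hcont : ContinuousOn (fun q : EuclideanSpace ℝ (Fin n) × ℝ => (v q.1 q.2, Gv q.1 q.2, Hv q.1 q.2, v' q.1 q.2))
      ((closure (ball x₀ R) ∩ closure ω) ×ˢ Icc t₀ t₁))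
    (hgrad : ∀ t ∈ Icc t₀ t₁, ∀ x ∈ closure (ball x₀ R) ∩ closure ω,
      HasGradientWithinAt (fun y => v y t) (Gv x t) (closure (ball x₀ R) ∩ closure ω) x)
    (hhess : ∀ t ∈ Icc t₀ t₁, ∀ x ∈ closure (ball x₀ R) ∩ closure ω,
      HasFDerivWithinAt (fun y => Gv y t) (Hv x t) (closure (ball x₀ R) ∩ closure ω) x)
    (htime : ∀ x ∈ closure (ball x₀ R) ∩ closure ω, ∀ t ∈ Icc t₀ t₁,
      HasDerivWithinAt (fun s => v x s) (v' x t) (Icc t₀ t₁) t)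
    (heq : ∀ x ∈ ball x₀ R ∩ ω, ∀ t ∈ Ioo t₀ t₁,
      v' x t - ∑ i : Fin n, ⟪Hv x t (EuclideanSpace.single i (1 : ℝ)),
        EuclideanSpace.single i (1 : ℝ)⟫ = ‖Gv x t‖ ^ p)
    (M N : ℝ) (hM : 0 < M) (hN : 0 < N)
    (hbd : ∀ b ∈ ball x₀ R ∩ frontier ω, ∀ t ∈ Icc t₀ t₁, ‖Gv b t‖ ≤ N)
    (hvM : ∀ x ∈ ball x₀ R ∩ ω, ∀ t ∈ Icc t₀ t₁, |v' x t| ≤ M)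
    (xs : EuclideanSpace ℝ (Fin n)) (hxs : xs ∈ ball x₀ R ∩ ω) (ts : ℝ) (hts : ts ∈ Ioo t₀ t₁) :
    ‖Gv xs ts‖ ^ 2 ≤ A * R ^ a * (R ^ 2 - ‖xs - x₀‖ ^ 2) ^ (-a) +
      (N ^ 2 + (2 * M) ^ (2 / p) + A * (ts - t₀) ^ (-(1 / (p - 1)))) := by
  by_contra hcon
  push Not at hcon
  have hp1 : 0 < p - 1 := by linarith
  have ha0 : 0 < a := by rw [ha]; positivity
  set U : Set (EuclideanSpace ℝ (Fin n)) := ball x₀ R ∩ ω with hUdef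
  set J : Set ℝ := Ioo t₀ t₁ with hJdef
  set Kx : Set (EuclideanSpace ℝ (Fin n)) := closure (ball x₀ R) ∩ closure ω with hKx
  have hU : IsOpen U := isOpen_ball.inter hω
  have hJ : IsOpen J := isOpen_Ioo
  have hUK : U ⊆ Kx := inter_subset_inter subset_closure subset_closure
  have hJI : J ⊆ Icc t₀ t₁ := Ioo_subset_Icc_self
  have hUJ : U ×ˢ J ⊆ Kx ×ˢ Icc t₀ t₁ := prod_mono hUK hJI
  have hnx : ∀ x ∈ U, Kx ∈ nhds x := fun x hx => mem_of_superset (hU.mem_nhds hx) hUK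
  have hnt : ∀ t ∈ J, Icc t₀ t₁ ∈ nhds t := fun t ht => mem_of_superset (hJ.mem_nhds ht) hJI
  -- positive distance
  have hd : ∀ x ∈ ball x₀ R, 0 < R ^ 2 - ‖x - x₀‖ ^ 2 := by
    intro x hx
    rw [mem_ball, dist_eq_norm] at hx
    have := norm_nonneg (x - x₀)
    nlinarith
  have hvc := hcont.fst
  have hGc0 := hcont.snd.fst
  have hHc0 := hcont.snd.snd.fst
  have hnormsq : ∀ x t, ∑ i, (Gv x t i) ^ 2 = ‖Gv x t‖ ^ 2 := by
    intro x t; rw [EuclideanSpace.real_norm_sq_eq]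
  -- bound
  have hKc : IsCompact (Kx ×ˢ Icc t₀ t₁) := by
    refine IsCompact.prod ?_ isCompact_Icc
    refine IsCompact.inter_right ?_ isClosed_closure
    rw [closure_ball _ hR.ne']
    exact isCompact_closedBall _ _
  obtain ⟨B0, hB0⟩ := hKc.exists_bound_of_continuousOn hGc0
  set B := B0 ^ 2 with hBdef
  have hB : ∀ q ∈ Kx ×ˢ Icc t₀ t₁, ‖Gv q.1 q.2‖ ^ 2 ≤ B := fun q hq =>
    pow_le_pow_left₀ (norm_nonneg _) (hB0 q hq) 2
  obtain ⟨d₀, hd₀, hdB⟩ := blowup (c := A * R ^ a) (B := B) (by positivity) ha0 hR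
  obtain ⟨τ₀, hτ₀, hτB⟩ := blowup (c := A) (b := 1 / (p - 1)) (B := B) hA0 (by positivity) hR
  set f : EuclideanSpace ℝ (Fin n) → ℝ := fun x => A * R ^ a * (R ^ 2 - ‖x - x₀‖ ^ 2) ^ (-a) with hf
  set f1 : Fin n → EuclideanSpace ℝ (Fin n) → ℝ := fun j x =>
    A * R ^ a * (2 * a * (R ^ 2 - ‖x - x₀‖ ^ 2) ^ (-a - 1) * (x - x₀) j) with hf1
  set f2 : Fin n → EuclideanSpace ℝ (Fin n) → ℝ := fun j x =>
    A * R ^ a * (4 * a * (a + 1) * (R ^ 2 - ‖x - x₀‖ ^ 2) ^ (-a - 2) * (x - x₀) j ^ 2 +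
        2 * a * (R ^ 2 - ‖x - x₀‖ ^ 2) ^ (-a - 1)) with hf2
  set g : ℝ → ℝ := fun t => N ^ 2 + (2 * M) ^ (2 / p) + A * (t - t₀) ^ (-(1 / (p - 1))) with hg
  set g1 : ℝ → ℝ := fun t => A * (-(1 / (p - 1)) * (t - t₀) ^ (-(1 / (p - 1)) - 1)) with hg1
  set F : EuclideanSpace ℝ (Fin n) × ℝ → ℝ := fun q => ∑ i, (Gv q.1 q.2 i) ^ 2 - f q.1 - g q.2 with hF
  have hfpos : ∀ x, 0 < R ^ 2 - ‖x - x₀‖ ^ 2 → 0 < f x := fun x hx => by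
    simp only [hf]; positivity
  have hgbig : ∀ t, t₀ < t → 0 < A * (t - t₀) ^ (-(1 / (p - 1))) := fun t ht => by
    have : 0 < t - t₀ := by linarith
    positivity
  have hM2 : 0 < (2 * M) ^ (2 / p) := by positivity
  have hN2 : 0 < N ^ 2 := by positivity
  have hin : ∀ q ∈ U ×ˢ J, 0 < F q → d₀ ≤ R ^ 2 - ‖q.1 - x₀‖ ^ 2 ∧ τ₀ ≤ q.2 - t₀ := by
    intro q hq hFq
    have h1 := hd q.1 hq.1.1
    have h2 := hfpos _ h1
    have h3 := hgbig q.2 hq.2.1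
    have h4 := hB q (hUJ hq)
    simp only [hF, hnormsq, hg] at hFq
    constructor
    · by_contra hlt
      push Not at hlt
      have := hdB _ h1 hlt
      simp only [hf] at hFq
      linarith
    · by_contra hlt
      push Not at hlt
      have := hτB _ (by linarith [hq.2.1]) hlt
      linarith
  have hFs : 0 < F (xs, ts) := by
    simp only [hF, hnormsq, hf, hg]; linarith
  set m := F (xs, ts) / 2 with hm
  have hm0 : 0 < m := by positivity
  -- continuity of f, g
  have hdc : Continuous (fun x : EuclideanSpace ℝ (Fin n) => R ^ 2 - ‖x - x₀‖ ^ 2) := by fun_prop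
  have hpc : ∀ b : ℝ, ContinuousOn (fun x : EuclideanSpace ℝ (Fin n) => (R ^ 2 - ‖x - x₀‖ ^ 2) ^ b)
      {x | 0 < R ^ 2 - ‖x - x₀‖ ^ 2} := fun b =>
    hdc.continuousOn.rpow_const fun x hx => Or.inl (ne_of_gt hx)
  have htc : ∀ b : ℝ, ContinuousOn (fun t : ℝ => (t - t₀) ^ b) (Ioi t₀) := fun b =>
    ContinuousOn.rpow_const (by fun_prop) fun t ht => Or.inl (by
      have : t₀ < t := ht
      linarith [this] |> fun h : 0 < t - t₀ => h.ne')
  have hfc : ContinuousOn f {x | 0 < R ^ 2 - ‖x - x₀‖ ^ 2} := continuousOn_const.mul (hpc _)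
  have hgc : ContinuousOn g (Ioi t₀) := continuousOn_const.add (continuousOn_const.mul (htc _))
  have hcoord : ∀ j : Fin n, Continuous (fun x : EuclideanSpace ℝ (Fin n) => (x - x₀) j) := by
    intro j; fun_prop
  have hGic : ∀ i, ContinuousOn (fun q : EuclideanSpace ℝ (Fin n) × ℝ => Gv q.1 q.2 i) (Kx ×ˢ Icc t₀ t₁) := by
    intro i
    exact (EuclideanSpace.proj i : EuclideanSpace ℝ (Fin n) →L[ℝ] ℝ).continuous.comp_continuousOn hGc0
  have hAic : ∀ i j, ContinuousOn (fun q : EuclideanSpace ℝ (Fin n) × ℝ =>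
      (Hv q.1 q.2 (EuclideanSpace.single i (1:ℝ))) j) (Kx ×ˢ Icc t₀ t₁) := by
    intro i j
    have : ContinuousOn (fun q : EuclideanSpace ℝ (Fin n) × ℝ =>
      (Hv q.1 q.2 (EuclideanSpace.single i (1:ℝ)))) (Kx ×ˢ Icc t₀ t₁) := hHc0.clm_apply continuousOn_const
    exact (EuclideanSpace.proj j : EuclideanSpace ℝ (Fin n) →L[ℝ] ℝ).continuous.comp_continuousOn this
  -- F continuous
  set Ω : Set (EuclideanSpace ℝ (Fin n) × ℝ) := (Kx ×ˢ Icc t₀ ts) ∩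
    {q | d₀ ≤ R ^ 2 - ‖q.1 - x₀‖ ^ 2 ∧ τ₀ ≤ q.2 - t₀} with hΩ
  have hΩsub : Ω ⊆ Kx ×ˢ Icc t₀ t₁ := fun q hq => ⟨hq.1.1, hq.1.2.1, hq.1.2.2.trans hts.2.le⟩
  have hΩc : IsCompact Ω := by
    refine IsCompact.of_isClosed_subset hKc ?_ hΩsub
    refine IsClosed.inter (IsClosed.prod (isClosed_closure.inter isClosed_closure) isClosed_Icc) ?_
    exact (isClosed_le (g := fun q : EuclideanSpace ℝ (Fin n) × ℝ => R ^ 2 - ‖q.1 - x₀‖ ^ 2)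
      continuous_const (by fun_prop)).inter (isClosed_le
      (g := fun q : EuclideanSpace ℝ (Fin n) × ℝ => q.2 - t₀) continuous_const (by fun_prop))
  have hFcont : ∀ S : Set (EuclideanSpace ℝ (Fin n) × ℝ), S ⊆ Kx ×ˢ Icc t₀ t₁ →
      (∀ q ∈ S, 0 < R ^ 2 - ‖q.1 - x₀‖ ^ 2 ∧ t₀ < q.2) → ContinuousOn F S := by
    intro S hS1 hS2
    refine ((continuousOn_finsetSum _ fun i _ => ((hGic i).mono hS1).pow 2).sub ?_).sub ?_
    · exact hfc.comp continuousOn_fst fun q hq => (hS2 q hq).1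
    · exact hgc.comp continuousOn_snd fun q hq => (hS2 q hq).2
  have hFΩ : ContinuousOn F Ω := hFcont Ω hΩsub fun q hq =>
    ⟨lt_of_lt_of_le hd₀ hq.2.1, by linarith [hq.2.2]⟩
  have hFUJ : ContinuousOn F (U ×ˢ J) := hFcont _ hUJ fun q hq => ⟨hd _ hq.1.1, hq.2.1⟩
  set K : Set (EuclideanSpace ℝ (Fin n) × ℝ) := Ω ∩ F ⁻¹' (Ici m) with hK
  have hKcomp : IsCompact K :=
    IsCompact.of_isClosed_subset hΩc
      (hFΩ.preimage_isClosed_of_isClosed hΩc.isClosed isClosed_Ici) inter_subset_left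
  have hKU : K ⊆ U ×ˢ J := by
    rintro q ⟨hq, hqF⟩
    have hqF' : m ≤ F q := hqF
    have h1 : 0 < R ^ 2 - ‖q.1 - x₀‖ ^ 2 := lt_of_lt_of_le hd₀ hq.2.1
    have hqball : q.1 ∈ ball x₀ R := by
      rw [mem_ball, dist_eq_norm]
      exact lt_of_pow_lt_pow_left₀ 2 hR.le (by linarith)
    have ht : t₀ < q.2 := by linarith [hq.2.2]
    refine ⟨⟨hqball, ?_⟩, ht, lt_of_le_of_lt hq.1.2.2 hts.2⟩
    by_contra hnot
    have hfr : q.1 ∈ frontier ω := ⟨hq.1.1.2, by rwa [hω.interior_eq]⟩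
    have h2 := hbd q.1 ⟨hqball, hfr⟩ q.2 (hΩsub hq).2
    have h3 : ‖Gv q.1 q.2‖ ^ 2 ≤ N ^ 2 := pow_le_pow_left₀ (norm_nonneg _) h2 2
    have h4 := hfpos _ h1
    have h5 := hgbig _ ht
    simp only [hF, hnormsq, hg] at hqF'
    linarith
  have hmemK : ∀ q ∈ U ×ˢ J, m ≤ F q → q.2 ≤ ts → q ∈ K := by
    intro q hq hFq hqt
    exact ⟨⟨⟨hUK hq.1, hq.2.1.le, hqt⟩, hin q hq (by linarith)⟩, hFq⟩
  have hop : ∀ q ∈ K, m < F q → ∀ᶠ q' in nhds q, q'.2 ≤ q.2 → q' ∈ K := by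
    intro q hq hFq
    have hqU := hKU hq
    have ho : U ×ˢ J ∈ nhds q := (hU.prod hJ).mem_nhds hqU
    filter_upwards [ho, (hFUJ.continuousAt ho).eventually (lt_mem_nhds hFq)] with q' h1 h2 h3
    exact hmemK q' h1 (le_of_lt h2) (h3.trans hq.1.1.2.2)
  have hex : ∃ q ∈ K, m < F q :=
    ⟨(xs, ts), hmemK _ ⟨hxs, hts⟩ (by simp only [hm]; linarith) le_rfl, by simp only [hm]; linarith⟩
  -- line derivatives
  have hline : ∀ (x : EuclideanSpace ℝ (Fin n)) (i : Fin n),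
      HasDerivAt (fun s : ℝ => x + s • EuclideanSpace.single i (1:ℝ)) (EuclideanSpace.single i (1:ℝ)) 0 := by
    intro x i
    have := ((hasDerivAt_id (0:ℝ)).smul_const (EuclideanSpace.single i (1:ℝ))).const_add x
    simpa using this
  have hGd : ∀ i j, ∀ x ∈ U, ∀ t ∈ J, HasDerivAt (fun s : ℝ => Gv (x + s • EuclideanSpace.single i (1:ℝ)) t j)
      ((Hv x t (EuclideanSpace.single i (1:ℝ))) j) 0 := by
    intro i j x hx t ht
    have h1 : HasFDerivAt (fun y => Gv y t) (Hv x t) (x + (0:ℝ) • EuclideanSpace.single i (1:ℝ)) := by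
      simpa using (hhess t (hJI ht) x (hUK hx)).hasFDerivAt (hnx x hx)
    have h2 := h1.comp_hasDerivAt (0:ℝ) (hline x i)
    exact (EuclideanSpace.proj j : EuclideanSpace ℝ (Fin n) →L[ℝ] ℝ).hasFDerivAt.comp_hasDerivAt (0:ℝ) h2
  obtain ⟨q, hqK, hq1, hq2⟩ := core (fun i : Fin n => EuclideanSpace.single i (1:ℝ)) hU hJ v
    (fun i x t => Gv x t i) (fun i j x t => (Hv x t (EuclideanSpace.single i (1:ℝ))) j) v'
    (fun x t => (∑ i, (Gv x t i) ^ 2) ^ (p / 2))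
    (fun i x t => p * (∑ i, (Gv x t i) ^ 2) ^ (p / 2 - 1) *
      ∑ j, Gv x t j * (Hv x t (EuclideanSpace.single i (1:ℝ))) j)
    (by
      intro i x hx t ht
      have h1 : HasFDerivAt (fun y => v y t) (InnerProductSpace.toDual ℝ _ (Gv x t))
          (x + (0:ℝ) • EuclideanSpace.single i (1:ℝ)) := by
        simpa using (hgrad t (hJI ht) x (hUK hx)).hasFDerivWithinAt.hasFDerivAt (hnx x hx)
      refine (h1.comp_hasDerivAt (0:ℝ) (hline x i)).congr_deriv ?_
      simp [EuclideanSpace.inner_single_right])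
    hGd
    (by
      intro i x hx t ht
      have h1 : HasDerivAt (fun s : ℝ => ∑ j, (Gv (x + s • EuclideanSpace.single i (1:ℝ)) t j) ^ 2)
          (∑ j, 2 * Gv x t j * (Hv x t (EuclideanSpace.single i (1:ℝ))) j) 0 := by
        refine HasDerivAt.fun_sum fun j _ => ?_
        refine ((hGd i j x hx t ht).pow 2).congr_deriv ?_
        simp
      refine (h1.rpow_const (p := p / 2) (Or.inr (by linarith))).congr_deriv ?_
      simp only [zero_smul, add_zero, mul_assoc, ← Finset.mul_sum]
      ring)
    (fun x hx t ht => (htime x (hUK hx) t (hJI ht)).hasDerivAt (hnt t ht))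
    (by
      intro x hx t ht
      have := heq x hx t ht
      simp only [EuclideanSpace.inner_single_right] at this
      simp only [hnormsq]
      rw [← Real.rpow_natCast, ← Real.rpow_mul (norm_nonneg _)]
      rw [show ((2:ℕ):ℝ) * (p / 2) = p by push_cast; ring, ← this]
      simp)
    (hvc.mono hUJ) (fun i => (hGic i).mono hUJ) (fun i j => (hAic i j).mono hUJ)
    (by
      intro i
      refine ContinuousOn.mul (continuousOn_const.mul (ContinuousOn.rpow_const ?_ fun q _ => Or.inr (by linarith))) ?_
      · exact continuousOn_finsetSum _ fun i _ => ((hGic i).mono hUJ).pow 2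
      · exact continuousOn_finsetSum _ fun j _ => ((hGic j).mono hUJ).mul ((hAic i j).mono hUJ))
    f f1 f2 g g1
    (fun j x hx => barrier_deriv x₀ R A a j x (hd x hx.1))
    (fun j x hx => barrier_deriv2 x₀ R A a j x (hd x hx.1))
    (by
      intro t ht
      have h0 : t - t₀ ≠ 0 := by have := ht.1; linarith [this] |> fun h : 0 < t - t₀ => h.ne'
      have := ((((hasDerivAt_id t).sub_const t₀).rpow_const (p := -(1 / (p - 1))) (Or.inl h0)).const_mul A).const_add
        (N ^ 2 + (2 * M) ^ (2 / p))
      refine this.congr_deriv ?_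
      simp only [hg1, id]
      ring)
    (hfc.mono fun x hx => hd x hx.1)
    (fun j => continuousOn_const.mul ((continuousOn_const.mul ((hpc _).mono fun x hx => hd x hx.1)).mul
      (hcoord j).continuousOn))
    (fun j => continuousOn_const.mul (((continuousOn_const.mul ((hpc _).mono fun x hx => hd x hx.1)).mul
      ((hcoord j).pow 2).continuousOn).add (continuousOn_const.mul ((hpc _).mono fun x hx => hd x hx.1))))
    (continuousOn_const.mul (continuousOn_const.mul ((htc _).mono fun t ht => ht.1)))
    hKcomp hKU m hop hex
  have hqU := hKU hqK
  have hdq := hd _ hqU.1.1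
  have hfq := hfpos _ hdq
  have hgq := hgbig _ hqU.2.1
  have hFq : m ≤ F q := hqK.2
  have hFq' : m ≤ ∑ i, (Gv q.1 q.2 i) ^ 2 - f q.1 - (N ^ 2 + (2 * M) ^ (2 / p) + A * (q.2 - t₀) ^ (-(1 / (p - 1)))) := hFq
  have hWM : (2 * M) ^ (2 / p) ≤ ∑ i, (Gv q.1 q.2 i) ^ 2 := by linarith
  have hW0 : 0 < ∑ i, (Gv q.1 q.2 i) ^ 2 := by linarith
  refine final_alg hn hp ha hA0 hR hdq (by nlinarith [sq_nonneg ‖q.1 - x₀‖])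
    (τ := q.2 - t₀) (by linarith [hqU.2.1]) hW0 (fun j => (q.1 - x₀) j) (fun i => Gv q.1 q.2 i)
    (fun i j => (Hv q.1 q.2 (EuclideanSpace.single i (1:ℝ))) j) ?_ rfl ?_ ?_ (M := M) ?_
    (hvM _ hqU.1 _ (hJI hqU.2)) ?_ hq1 hq2 hA
  · rw [← EuclideanSpace.real_norm_sq_eq]; linarith
  · show f q.1 ≤ _
    linarith
  · linarith
  · have := Real.rpow_le_rpow hM2.le hWM (z := p / 2) (by linarith)
    rw [← Real.rpow_mul (by positivity), show 2 / p * (p / 2) = 1 by field_simp, Real.rpow_one] at this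
    exact this
  · have := heq q.1 hqU.1 q.2 hqU.2
    simp only [EuclideanSpace.inner_single_right] at this
    simp only [hnormsq]
    rw [← Real.rpow_natCast, ← Real.rpow_mul (norm_nonneg _)]
    rw [show ((2:ℕ):ℝ) * (p / 2) = p by push_cast; ring, ← this]
    simp

theorem stmt17 {n : ℕ} (hn : 1 ≤ n) (p : ℝ) (hp : 2 < p) :
    ∃ C > (0 : ℝ),
    ∀ ω : Set (EuclideanSpace ℝ (Fin n)), IsOpen ω →
    ∀ x₀ ∈ frontier ω, ∀ R > (0 : ℝ), ∀ t₀ t₁ : ℝ, t₀ < t₁ →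
    ∀ (v : EuclideanSpace ℝ (Fin n) → ℝ → ℝ) (Gv : EuclideanSpace ℝ (Fin n) → ℝ → EuclideanSpace ℝ (Fin n)) (Hv : EuclideanSpace ℝ (Fin n) → ℝ → (EuclideanSpace ℝ (Fin n) →L[ℝ] EuclideanSpace ℝ (Fin n)))
      (v' : EuclideanSpace ℝ (Fin n) → ℝ → ℝ),
    ContinuousOn (fun q : EuclideanSpace ℝ (Fin n) × ℝ => (v q.1 q.2, Gv q.1 q.2, Hv q.1 q.2, v' q.1 q.2))
      ((closure (ball x₀ R) ∩ closure ω) ×ˢ Icc t₀ t₁) →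
    (∀ t ∈ Icc t₀ t₁, ∀ x ∈ closure (ball x₀ R) ∩ closure ω,
      HasGradientWithinAt (fun y => v y t) (Gv x t) (closure (ball x₀ R) ∩ closure ω) x) →
    (∀ t ∈ Icc t₀ t₁, ∀ x ∈ closure (ball x₀ R) ∩ closure ω,
      HasFDerivWithinAt (fun y => Gv y t) (Hv x t) (closure (ball x₀ R) ∩ closure ω) x) →
    (∀ x ∈ closure (ball x₀ R) ∩ closure ω, ∀ t ∈ Icc t₀ t₁,
      HasDerivWithinAt (fun s => v x s) (v' x t) (Icc t₀ t₁) t) →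
    (∀ x ∈ ball x₀ R ∩ ω, ∀ t ∈ Ioo t₀ t₁,
      v' x t - ∑ i : Fin n, ⟪Hv x t (EuclideanSpace.single i (1 : ℝ)),
        EuclideanSpace.single i (1 : ℝ)⟫ = ‖Gv x t‖ ^ p) →
    (∀ b ∈ ball x₀ R ∩ frontier ω, ∀ t ∈ Ioo t₀ t₁, v b t = 0) →
    ∀ M N : ℝ, 0 < M → 0 < N →
    (∀ b ∈ ball x₀ R ∩ frontier ω, ∀ t ∈ Icc t₀ t₁, ‖Gv b t‖ ≤ N) →
    (∀ x ∈ ball x₀ R ∩ ω, ∀ t ∈ Icc t₀ t₁, |v' x t| ≤ M) →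
    ∀ x ∈ ball x₀ (R / 2) ∩ ω, ∀ t ∈ Ioo t₀ t₁,
      ‖Gv x t‖ ≤ C * (N + M ^ (1 / p) + R ^ (-(1 / (p - 1))) +
        (t - t₀) ^ (-(1 / (2 * (p - 1))))) := by
  set a : ℝ := 2 / (p - 1) with ha
  have hp1 : 0 < p - 1 := by linarith
  have ha0 : 0 < a := by rw [ha]; positivity
  obtain ⟨A, hA0, hA⟩ := exists_A (a := a) hn hp
  refine ⟨1 + (2:ℝ) ^ (2 / p) + A * 2 ^ a + A, by positivity, ?_⟩
  intro ω hω x₀ hx₀ R hR t₀ t₁ ht v Gv Hv v' hcont hgrad hhess htime heq hzero M N hM hN hbd hvM x hx t ht'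
  have hxR : x ∈ ball x₀ R ∩ ω := ⟨ball_subset_ball (by linarith) hx.1, hx.2⟩
  have key := bern hn hp ha hA0 hA ω hω x₀ R hR t₀ t₁ v Gv Hv v' hcont hgrad hhess htime heq M N hM hN
    hbd hvM x hxR t ht'
  have hτ : 0 < t - t₀ := by linarith [ht'.1]
  set a2 := M ^ (1 / p) with ha2
  set a3 := R ^ (-(1 / (p - 1))) with ha3
  set a4 := (t - t₀) ^ (-(1 / (2 * (p - 1)))) with ha4
  have p2 : 0 < a2 := by positivity
  have p3 : 0 < a3 := by positivity
  have p4 : 0 < a4 := by positivity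
  have e2 : (2 * M) ^ (2 / p) = 2 ^ (2 / p) * a2 ^ 2 := by
    rw [Real.mul_rpow (by norm_num) hM.le, ha2, ← Real.rpow_natCast, ← Real.rpow_mul hM.le]
    congr 2; push_cast; ring
  have e4 : (t - t₀) ^ (-(1 / (p - 1))) = a4 ^ 2 := by
    rw [ha4, ← Real.rpow_natCast, ← Real.rpow_mul hτ.le]
    congr 1; push_cast; field_simp
  have e3 : A * R ^ a * (R ^ 2 - ‖x - x₀‖ ^ 2) ^ (-a) ≤ A * 2 ^ a * a3 ^ 2 := by
    have h3 : a3 ^ 2 = R ^ (-a) := by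
      rw [ha3, ← Real.rpow_natCast, ← Real.rpow_mul hR.le]
      congr 1; push_cast; rw [ha]; field_simp
    have hxn : ‖x - x₀‖ < R / 2 := by rw [← dist_eq_norm]; exact hx.1
    have hd1 : R ^ 2 / 2 ≤ R ^ 2 - ‖x - x₀‖ ^ 2 := by
      have := norm_nonneg (x - x₀)
      nlinarith
    have h4 : (R ^ 2 - ‖x - x₀‖ ^ 2) ^ (-a) ≤ (R ^ 2 / 2) ^ (-a) :=
      Real.rpow_le_rpow_of_nonpos (by positivity) hd1 (by linarith)
    have h5 : R ^ a * (R ^ 2 / 2) ^ (-a) = 2 ^ a * R ^ (-a) := by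
      rw [Real.div_rpow (by positivity) (by norm_num), Real.rpow_neg (by norm_num : (0:ℝ) ≤ 2),
        ← Real.rpow_natCast, ← Real.rpow_mul hR.le,
        show ((2:ℕ):ℝ) * (-a) = -a + -a by push_cast; ring, Real.rpow_add hR, Real.rpow_neg hR.le]
      have : R ^ a ≠ 0 := by positivity
      field_simp
    calc A * R ^ a * (R ^ 2 - ‖x - x₀‖ ^ 2) ^ (-a) ≤ A * R ^ a * (R ^ 2 / 2) ^ (-a) := by gcongr
      _ = A * 2 ^ a * a3 ^ 2 := by rw [mul_assoc, h5, h3]; ring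
  rw [e2, e4] at key
  have q2 : (0:ℝ) < 2 ^ (2 / p) := by positivity
  have q3 : 0 < A * 2 ^ a := by positivity
  generalize (2:ℝ) ^ (2 / p) = c2 at *
  generalize A * 2 ^ a = c3 at *
  clear_value a2 a3 a4
  set C := 1 + c2 + c3 + A with hC
  have hC1 : 1 ≤ C := by linarith
  refine le_of_sq_le_sq ?_ (by positivity)
  calc ‖Gv x t‖ ^ 2 ≤ N ^ 2 + c2 * a2 ^ 2 + c3 * a3 ^ 2 + A * a4 ^ 2 := by linarith
    _ ≤ C * N ^ 2 + C * a2 ^ 2 + C * a3 ^ 2 + C * a4 ^ 2 := by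
      have : N ^ 2 ≤ C * N ^ 2 := le_mul_of_one_le_left (sq_nonneg _) hC1
      have i2 : c2 ≤ C := by linarith
      have i3 : c3 ≤ C := by linarith
      have i4 : A ≤ C := by linarith
      gcongr
    _ = C * (N ^ 2 + a2 ^ 2 + a3 ^ 2 + a4 ^ 2) := by ring
    _ ≤ C ^ 2 * (N + a2 + a3 + a4) ^ 2 := by
      refine mul_le_mul (by nlinarith) ?_ (by positivity) (by positivity)
      have : 0 ≤ N * a2 + N * a3 + N * a4 + a2 * a3 + a2 * a4 + a3 * a4 := by positivity
      nlinarith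
    _ = _ := by ring
end
end
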